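/- Let the hypotheses of the quadratic Lyapunov functional theorem for the nonlinear delay equation hold with j = 0 and ν ≥ 0 (i.e., the characteristic equation det(α(p)−pI) = 0 has no roots with Re p ≥ −ν, the quadratic form 𝓕(v,ξ) = 𝒢(Cv,ξ) satisfies 𝓕(v,0) ≥ 0 and (SC) or (MSC), and the frequency-domain condition sup_{0≠ξ∈ℂᵐ} 𝒢^ℂ(−W(iω−ν)ξ,ξ)/|ξ|²_Ξ < 0 holds for all ω ∈ ℝ). Then: (1) if additionally (SC) and (L1) hold and W ≡ 0, there exist constants M > 0 and ε > 0 such that ‖ψ^t(q,v₀)‖_𝔼 ≤ M e^{−(ν+ε)t} ‖v₀‖_𝔼 for all t ≥ 0, q ∈ ℝ, v₀ ∈ 𝔼; (2) if (MSC) and (L2) hold and there exists a complete trajectory v* : ℝ → 𝔼 (i.e. ψ^t(q, v*(q)) = v*(q+t) for all t ≥ 0, q ∈ ℝ) which is bounded on ℝ, then v* is unique and there exist constants M > 0 and ε > 0 such that ‖ψ^t(q,v₀) − ψ^t(q,v*(q))‖_𝔼 ≤ M e^{−(ν+ε)t} ‖v₀ − v*(q)‖_𝔼 for all t ≥ 0,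 q ∈ ℝ, v₀ ∈ 𝔼. -/

import Mathlib

open MeasureTheory Filter Topology Matrix

noncomputable section

namespace DelayStability

variable {n : ℕ}

/-- The history segment `x_t ∈ C([-τ, 0]; ℝⁿ)` of a continuous `x : ℝ → ℝⁿ`. -/
def seg (τ : ℝ) (x : ℝ → (Fin n → ℝ)) (hx : Continuous x) (t : ℝ) :
    C(Set.Icc (-τ) (0:ℝ), Fin n → ℝ) :=
  ⟨fun θ => x (t + θ), hx.comp (continuous_const.add continuous_subtype_val)⟩

/-- The measure of `L²(-τ, 0; ℝⁿ)`. -/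
def μτ (τ : ℝ) : Measure ℝ := volume.restrict (Set.Ioo (-τ) 0)

/-- The delay phase Hilbert space `ℍ = ℝⁿ × L²(-τ, 0; ℝⁿ)`. -/
abbrev HSp (τ : ℝ) (n : ℕ) := (Fin n → ℝ) × Lp (Fin n → ℝ) 2 (μτ τ)

/-- The space `𝔼 = C([-τ, 0]; ℝⁿ)`. -/
abbrev EE (τ : ℝ) (n : ℕ) := C(Set.Icc (-τ) (0:ℝ), Fin n → ℝ)

/-- Real part of the exponential segment `θ ↦ e^{pθ} w`. -/
def expSegRe (τ : ℝ) {n : ℕ} (p : ℂ) (w : Fin n → ℂ) : EE τ n :=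
  ⟨fun θ => fun i => (Complex.exp (p * (θ : ℝ)) * w i).re, by
    apply continuous_pi
    intro i
    exact Complex.continuous_re.comp
      ((Complex.continuous_exp.comp (continuous_const.mul
        (Complex.continuous_ofReal.comp continuous_subtype_val))).mul continuous_const)⟩

/-- The quadratic form `𝒢(σ, ξ)` on `ℝʳ × ℝᵐ` given by matrices `G₁, G₂, G₃`. -/
def Gq {r m : ℕ} (G1 : Matrix (Fin r) (Fin r) ℝ) (G2 : Matrix (Fin r) (Fin m) ℝ)
    (G3 : Matrix (Fin m) (Fin m) ℝ) (σ : Fin r → ℝ) (ξ : Fin m → ℝ) : ℝ :=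
  σ ⬝ᵥ G1.mulVec σ + 2 * (σ ⬝ᵥ G2.mulVec ξ) + ξ ⬝ᵥ G3.mulVec ξ

/-- The Hermitian extension `𝒢^ℂ` of `𝒢` to `ℂʳ × ℂᵐ`. -/
def GqC {r m : ℕ} (G1 : Matrix (Fin r) (Fin r) ℝ) (G2 : Matrix (Fin r) (Fin m) ℝ)
    (G3 : Matrix (Fin m) (Fin m) ℝ) (σ : Fin r → ℂ) (ξ : Fin m → ℂ) : ℝ :=
  Gq G1 G2 G3 (fun i => (σ i).re) (fun i => (ξ i).re) +
    Gq G1 G2 G3 (fun i => (σ i).im) (fun i => (ξ i).im)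

section Helpers

variable {n : ℕ}

open FourierTransform in
theorem fourier_L2_ae (f : ℝ → ℂ) (h1 : Integrable f) (h2 : MemLp f 2) :
    ((𝓕 (h2.toLp f) : Lp ℂ 2 (volume : Measure ℝ)) : ℝ → ℂ) =ᵐ[volume] 𝓕 f := by
  apply ae_eq_of_integral_contDiff_smul_eq
  · exact (Lp.memLp _).locallyIntegrable (by norm_num)
  · refine Continuous.locallyIntegrable ?_
    exact VectorFourier.fourierIntegral_continuous Real.continuous_fourierChar
      (L := innerₗ ℝ) (by fun_prop) h1
  intro g hg hgs
  have hgc : ContDiff ℝ (⊤ : ℕ∞) (fun x => (g x : ℂ)) := Complex.ofRealCLM.contDiff.comp hg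
  have hgcs : HasCompactSupport (fun x => (g x : ℂ)) := hgs.comp_left (g := Complex.ofReal) (by simp)
  let φ : SchwartzMap ℝ ℂ := hgcs.toSchwartzMap hgc
  have hφ : ∀ x, φ x = (g x : ℂ) := fun x => rfl
  have e1 := congrArg (fun T => T φ) (Lp.fourier_toTemperedDistribution_eq (h2.toLp f))
  simp only [TemperedDistribution.fourier_apply, Lp.toTemperedDistribution_apply] at e1
  have e2 : ∫ x, (𝓕 φ) x • (h2.toLp f : ℝ → ℂ) x = ∫ x, (𝓕 φ) x • f x := by
    apply integral_congr_ae
    filter_upwards [h2.coeFn_toLp] with x hx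
    rw [hx]
  have e3 : ∫ x, (𝓕 (φ : ℝ → ℂ)) x • f x = ∫ x, φ x • (𝓕 f) x := by
    have := VectorFourier.integral_fourierIntegral_smul_eq_flip (μ := (volume : Measure ℝ))
      (ν := (volume : Measure ℝ)) (L := innerₗ ℝ) (f := φ) (g := f) Real.continuous_fourierChar
      (by fun_prop) φ.integrable h1
    rw [flip_innerₗ] at this
    exact this
  have e4 : ∀ x, (𝓕 φ) x = (𝓕 (φ : ℝ → ℂ)) x := fun x => by rw [SchwartzMap.fourier_coe]
  simp only [e4] at e1 e2
  rw [e2, e3] at e1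
  simpa [hφ] using e1.symm

/-- Fourier transform of a real function, with kernel `exp(-2πiωt)`. -/
def FT (f : ℝ → ℝ) (ω : ℝ) : ℂ := ∫ t, Complex.exp (-(2 * Real.pi * ω * t : ℝ) * Complex.I) * f t

open FourierTransform in
theorem FT_eq (f : ℝ → ℝ) : FT f = 𝓕 (fun t => (f t : ℂ)) := by
  ext ω
  rw [Real.fourier_real_eq_integral_exp_smul, FT]
  congr 1; ext t
  rw [smul_eq_mul]; congr 2; push_cast; ring

theorem plancherel_ae (f g : ℝ → ℝ) (hf1 : Integrable f) (hf2 : MemLp f 2)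
    (hg1 : Integrable g) (hg2 : MemLp g 2) :
    Integrable (fun ω => (FT f ω).re * (FT g ω).re + (FT f ω).im * (FT g ω).im) ∧
    ∫ ω, ((FT f ω).re * (FT g ω).re + (FT f ω).im * (FT g ω).im) = ∫ t, f t * g t := by
  have hf1' : Integrable (fun t => (f t : ℂ)) := hf1.ofReal
  have hg1' : Integrable (fun t => (g t : ℂ)) := hg1.ofReal
  have hf2' : MemLp (fun t => (f t : ℂ)) 2 := hf2.ofReal
  have hg2' : MemLp (fun t => (g t : ℂ)) 2 := hg2.ofReal
  have ef := fourier_L2_ae _ hf1' hf2'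
  have eg := fourier_L2_ae _ hg1' hg2'
  rw [← FT_eq] at ef eg
  have mf : MemLp (FT f) 2 := (memLp_congr_ae ef).1 (Lp.memLp _)
  have mg : MemLp (FT g) 2 := (memLp_congr_ae eg).1 (Lp.memLp _)
  have hIntg : Integrable (fun ω => inner ℂ (FT f ω) (FT g ω)) := by
    refine (L2.integrable_inner (𝕜 := ℂ) (mf.toLp _) (mg.toLp _)).congr ?_
    filter_upwards [mf.coeFn_toLp, mg.coeFn_toLp] with x h1 h2; rw [h1, h2]
  have key := Lp.inner_fourier_eq (hf2'.toLp _) (hg2'.toLp _)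
  rw [L2.inner_def, L2.inner_def] at key
  have k1 : ∫ ω, inner ℂ (FT f ω) (FT g ω) = ∫ t, inner ℂ (f t : ℂ) (g t : ℂ) := by
    refine Eq.trans (integral_congr_ae ?_) (key.trans (integral_congr_ae ?_))
    · filter_upwards [ef, eg] with x h1 h2; rw [h1, h2]
    · filter_upwards [hf2'.coeFn_toLp, hg2'.coeFn_toLp] with x h1 h2; rw [h1, h2]
  have pt : ∀ ω, (FT f ω).re * (FT g ω).re + (FT f ω).im * (FT g ω).im
      = (inner ℂ (FT f ω) (FT g ω)).re := by
    intro ω; simp [Complex.mul_re]; ring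
  simp only [pt]
  refine ⟨hIntg.re, ?_⟩
  have h1 := integral_re (𝕜 := ℂ) hIntg
  simp only [RCLike.re_eq_complex_re] at h1
  rw [h1, k1]
  have : ∀ t, inner ℂ (f t : ℂ) (g t : ℂ) = ((f t * g t : ℝ) : ℂ) := by
    intro t; simp; ring
  simp only [this]
  rw [integral_complex_ofReal]; simp

theorem FT_plancherel_Gq {r m : ℕ} (G1 : Matrix (Fin r) (Fin r) ℝ) (G2 : Matrix (Fin r) (Fin m) ℝ)
    (G3 : Matrix (Fin m) (Fin m) ℝ) (s : ℝ → Fin r → ℝ) (x : ℝ → Fin m → ℝ)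
    (hs : ∀ i, Integrable (fun t => s t i) ∧ MemLp (fun t => s t i) 2)
    (hx : ∀ i, Integrable (fun t => x t i) ∧ MemLp (fun t => x t i) 2) :
    Integrable (fun t => Gq G1 G2 G3 (s t) (x t)) ∧
    Integrable (fun ω => GqC G1 G2 G3 (fun i => FT (fun t => s t i) ω)
      (fun i => FT (fun t => x t i) ω)) ∧
    ∫ ω, GqC G1 G2 G3 (fun i => FT (fun t => s t i) ω) (fun i => FT (fun t => x t i) ω) =
      ∫ t, Gq G1 G2 G3 (s t) (x t) := by
  have e1 : ∀ (σ : Fin r → ℝ) (ξ : Fin m → ℝ), Gq G1 G2 G3 σ ξ =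
      (∑ i, ∑ j, G1 i j * (σ i * σ j)) + (∑ i, ∑ j, (2 * G2 i j) * (σ i * ξ j)) +
      (∑ i, ∑ j, G3 i j * (ξ i * ξ j)) := by
    intro σ ξ
    simp only [Gq, dotProduct, mulVec, Finset.mul_sum]
    congr 1
    · congr 1
      all_goals
        refine Finset.sum_congr rfl fun i _ => Finset.sum_congr rfl fun j _ => ?_
        ring
    · refine Finset.sum_congr rfl fun i _ => Finset.sum_congr rfl fun j _ => ?_
      ring
  have e2 : ∀ (σ : Fin r → ℂ) (ξ : Fin m → ℂ), GqC G1 G2 G3 σ ξ =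
      (∑ i, ∑ j, G1 i j * ((σ i).re * (σ j).re + (σ i).im * (σ j).im)) +
      (∑ i, ∑ j, (2 * G2 i j) * ((σ i).re * (ξ j).re + (σ i).im * (ξ j).im)) +
      (∑ i, ∑ j, G3 i j * ((ξ i).re * (ξ j).re + (ξ i).im * (ξ j).im)) := by
    intro σ ξ
    simp only [GqC, e1, mul_add, Finset.sum_add_distrib]
    ring
  have pss := fun i j => plancherel_ae _ _ (hs i).1 (hs i).2 (hs j).1 (hs j).2
  have psx := fun i j => plancherel_ae _ _ (hs i).1 (hs i).2 (hx j).1 (hx j).2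
  have pxx := fun i j => plancherel_ae _ _ (hx i).1 (hx i).2 (hx j).1 (hx j).2
  have iss := fun i j => (hs i).2.integrable_mul (hs j).2
  have isx := fun i j => (hs i).2.integrable_mul (hx j).2
  have ixx := fun i j => (hx i).2.integrable_mul (hx j).2
  have sumint : ∀ {a b : ℕ} (c : Fin a → Fin b → ℝ) (f : Fin a → Fin b → ℝ → ℝ)
      (_ : ∀ i j, Integrable (f i j)), Integrable (fun t => ∑ i, ∑ j, c i j * f i j t) ∧
      ∫ t, ∑ i, ∑ j, c i j * f i j t = ∑ i, ∑ j, c i j * ∫ t, f i j t := by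
    intro a b c f h
    have h' : ∀ i j, Integrable (fun t => c i j * f i j t) := fun i j => (h i j).const_mul _
    have h'' : ∀ i, Integrable (fun t => ∑ j, c i j * f i j t) :=
      fun i => integrable_finsetSum _ fun j _ => h' i j
    refine ⟨integrable_finsetSum _ fun i _ => h'' i, ?_⟩
    rw [integral_finsetSum _ fun i _ => h'' i]
    refine Finset.sum_congr rfl fun i _ => ?_
    rw [integral_finsetSum _ fun j _ => h' i j]
    refine Finset.sum_congr rfl fun j _ => ?_
    rw [integral_const_mul]
  obtain ⟨a1, a1'⟩ := sumint G1 (fun i j t => s t i * s t j) iss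
  obtain ⟨a2, a2'⟩ := sumint (fun i j => 2 * G2 i j) (fun i j t => s t i * x t j) isx
  obtain ⟨a3, a3'⟩ := sumint G3 (fun i j t => x t i * x t j) ixx
  obtain ⟨b1, b1'⟩ := sumint G1 _ (fun i j => (pss i j).1)
  obtain ⟨b2, b2'⟩ := sumint (fun i j => 2 * G2 i j) _ (fun i j => (psx i j).1)
  obtain ⟨b3, b3'⟩ := sumint G3 _ (fun i j => (pxx i j).1)
  simp only [e1, e2]
  refine ⟨(a1.add a2).add a3, (b1.add b2).add b3, ?_⟩
  have A := integral_add (a1.add a2) a3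
  have A' := integral_add a1 a2
  have B := integral_add (b1.add b2) b3
  have B' := integral_add b1 b2
  simp only [Pi.add_apply] at A A' B B'
  rw [A, A', B, B', a1', a2', a3', b1', b2', b3']
  simp only [fun i j => (pss i j).2, fun i j => (psx i j).2, fun i j => (pxx i j).2]

/-- Measurable functions with two-sided exponential decay. -/
def Dc (ε : ℝ) (f : ℝ → ℝ) : Prop :=
  AEStronglyMeasurable f volume ∧ ∃ C, ∀ t, |f t| ≤ C * Real.exp (-ε * |t|)

theorem integrable_exp_abs {ε : ℝ} (hε : 0 < ε) :
    Integrable (fun t : ℝ => Real.exp (-ε * |t|)) := by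
  rw [← integrableOn_univ, ← Set.Iic_union_Ioi (a := (0:ℝ))]
  refine IntegrableOn.union ?_ ?_
  · refine (integrableOn_exp_mul_Iic hε 0).congr_fun (fun t ht => ?_) measurableSet_Iic
    simp only [abs_of_nonpos (Set.mem_Iic.1 ht)]; congr 1; ring
  · refine (integrableOn_exp_mul_Ioi (a := -ε) (by linarith) 0).congr_fun (fun t ht => ?_)
      measurableSet_Ioi
    simp only [abs_of_pos (Set.mem_Ioi.1 ht)]

theorem Dc.integrable {ε : ℝ} (hε : 0 < ε) {f : ℝ → ℝ} (h : Dc ε f) : Integrable f := by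
  obtain ⟨hm, C, hC⟩ := h
  exact ((integrable_exp_abs hε).const_mul C).mono' hm (Eventually.of_forall hC)

theorem Dc.mul {ε : ℝ} (hε : 0 < ε) {f g : ℝ → ℝ} (h : Dc ε f) (h' : Dc ε g) :
    Dc ε (fun t => f t * g t) := by
  obtain ⟨hm, C, hC⟩ := h
  obtain ⟨hm', C', hC'⟩ := h'
  refine ⟨hm.mul hm', C * C', fun t => ?_⟩
  have h0 : Real.exp (-ε * |t|) ≤ 1 := Real.exp_le_one_iff.2 (by nlinarith [abs_nonneg t])
  have h1 := Real.exp_pos (-ε * |t|)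
  have hC0 : 0 ≤ C := by
    by_contra hh; nlinarith [hC t, abs_nonneg (f t)]
  have hC'0 : 0 ≤ C' := by
    by_contra hh; nlinarith [hC' t, abs_nonneg (g t)]
  rw [abs_mul]
  calc |f t| * |g t| ≤ (C * Real.exp (-ε * |t|)) * (C' * Real.exp (-ε * |t|)) :=
        mul_le_mul (hC t) (hC' t) (abs_nonneg _) (by positivity)
    _ = C * C' * Real.exp (-ε * |t|) * Real.exp (-ε * |t|) := by ring
    _ ≤ C * C' * Real.exp (-ε * |t|) * 1 := by gcongr
    _ = _ := by ring

theorem Dc.memLp {ε : ℝ} (hε : 0 < ε) {f : ℝ → ℝ} (h : Dc ε f) : MemLp f 2 := by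
  rw [memLp_two_iff_integrable_sq h.1]
  simpa [sq] using (h.mul hε h).integrable hε

theorem seg_apply (τ : ℝ) (x : ℝ → (Fin n → ℝ)) (hx : Continuous x) (t : ℝ)
    (θ : Set.Icc (-τ) (0:ℝ)) : seg τ x hx t θ = x (t + θ) := rfl

theorem seg_continuous (τ : ℝ) (x : ℝ → (Fin n → ℝ)) (hx : Continuous x) :
    Continuous (fun t => seg τ x hx t) := by
  apply ContinuousMap.continuous_of_continuous_uncurry
  exact hx.comp (continuous_fst.add (continuous_subtype_val.comp continuous_snd))

theorem norm_seg_le (τ : ℝ) (x : ℝ → (Fin n → ℝ)) (hx : Continuous x) (t c : ℝ) (hc : 0 ≤ c)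
    (h : ∀ s, t - τ ≤ s → s ≤ t → ‖x s‖ ≤ c) : ‖seg τ x hx t‖ ≤ c := by
  rw [ContinuousMap.norm_le _ hc]
  intro θ
  have h1 := θ.2.1
  have h2 := θ.2.2
  exact h _ (by linarith) (by linarith)

theorem le_norm_seg (τ : ℝ) (x : ℝ → (Fin n → ℝ)) (hx : Continuous x) (t s : ℝ)
    (h1 : t - τ ≤ s) (h2 : s ≤ t) : ‖x s‖ ≤ ‖seg τ x hx t‖ := by
  have := (seg τ x hx t).norm_coe_le_norm ⟨s - t, by constructor <;> linarith⟩
  simpa [seg_apply] using this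

/-- weight -/
def Ew (lam t : ℝ) : ℝ := Real.exp (lam * max t 0)

theorem Ew_cont (lam : ℝ) : Continuous (Ew lam) := by unfold Ew; fun_prop

theorem Ew_pos (lam t : ℝ) : 0 < Ew lam t := Real.exp_pos _

open BoundedContinuousFunction in
/-- unweighted function -/
def Xu (lam : ℝ) (u : ℝ →ᵇ (Fin n → ℝ)) (t : ℝ) : Fin n → ℝ := Ew lam t • u t

open BoundedContinuousFunction in
theorem Xu_cont (lam : ℝ) (u : ℝ →ᵇ (Fin n → ℝ)) : Continuous (Xu lam u) :=
  (Ew_cont lam).smul u.continuous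

open BoundedContinuousFunction in
/-- integral operator -/
def Iop {τ : ℝ} (A : EE τ n →L[ℝ] (Fin n → ℝ)) (lam : ℝ) (u : ℝ →ᵇ (Fin n → ℝ)) (t : ℝ) :
    Fin n → ℝ := ∫ s in (0:ℝ)..max t 0, A (seg τ (Xu lam u) (Xu_cont lam u) s)

open BoundedContinuousFunction in
theorem Iop_integrand_cont {τ : ℝ} (A : EE τ n →L[ℝ] (Fin n → ℝ)) (lam : ℝ)
    (u : ℝ →ᵇ (Fin n → ℝ)) : Continuous fun s => A (seg τ (Xu lam u) (Xu_cont lam u) s) :=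
  A.continuous.comp (seg_continuous _ _ _)

open BoundedContinuousFunction in
theorem Iop_cont {τ : ℝ} (A : EE τ n →L[ℝ] (Fin n → ℝ)) (lam : ℝ)
    (u : ℝ →ᵇ (Fin n → ℝ)) : Continuous (Iop A lam u) := by
  have h : Continuous fun T => ∫ s in (0:ℝ)..T, A (seg τ (Xu lam u) (Xu_cont lam u) s) :=
    intervalIntegral.continuous_primitive
      (fun a b => (Iop_integrand_cont A lam u).intervalIntegrable a b) 0
  exact h.comp (continuous_id.max continuous_const)

open BoundedContinuousFunction in
theorem Iop_bound {τ : ℝ} (A : EE τ n →L[ℝ] (Fin n → ℝ)) (lam : ℝ) (hl : 2 * ‖A‖ < lam)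
    (u : ℝ →ᵇ (Fin n → ℝ)) (t : ℝ) : ‖Iop A lam u t‖ ≤ Ew lam t * (‖u‖ / 2) := by
  have hlam : 0 < lam := lt_of_le_of_lt (by positivity) hl
  have h1 : ∀ s ∈ Set.Icc 0 (max t 0), ‖A (seg τ (Xu lam u) (Xu_cont lam u) s)‖
      ≤ (lam / 2 * ‖u‖) * Real.exp (lam * s) := by
    intro s hs
    have hsg : ‖seg τ (Xu lam u) (Xu_cont lam u) s‖ ≤ Real.exp (lam * s) * ‖u‖ := by
      apply norm_seg_le _ _ _ _ _ (by positivity)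
      intro r _ hr
      rw [Xu, norm_smul, Ew, Real.norm_of_nonneg (Real.exp_pos _).le]
      gcongr
      · exact max_le hr hs.1
      · exact u.norm_coe_le_norm r
    calc _ ≤ ‖A‖ * (Real.exp (lam * s) * ‖u‖) := (A.le_opNorm _).trans (by gcongr)
      _ ≤ (lam / 2) * (Real.exp (lam * s) * ‖u‖) := by gcongr; linarith
      _ = _ := by ring
  have h2 : ‖Iop A lam u t‖ ≤ ∫ s in (0:ℝ)..max t 0, (lam / 2 * ‖u‖) * Real.exp (lam * s) := by
    refine intervalIntegral.norm_integral_le_of_norm_le (le_max_right _ _) ?_ ?_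
    · exact Eventually.of_forall fun s hs => h1 s ⟨hs.1.le, hs.2⟩
    · exact (by fun_prop : Continuous _).intervalIntegrable _ _
  refine h2.trans ?_
  rw [intervalIntegral.integral_const_mul]
  have h3 : ∫ s in (0:ℝ)..max t 0, Real.exp (lam * s) = lam⁻¹ * (Ew lam t - 1) := by
    rw [intervalIntegral.integral_comp_mul_left (fun s => Real.exp s) hlam.ne', integral_exp]
    simp [Ew]
  rw [h3]
  have : lam / 2 * ‖u‖ * (lam⁻¹ * (Ew lam t - 1)) = (‖u‖ / 2) * (Ew lam t - 1) := by
    field_simp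
  rw [this]
  nlinarith [norm_nonneg u]

open BoundedContinuousFunction in
theorem Iop_sub {τ : ℝ} (A : EE τ n →L[ℝ] (Fin n → ℝ)) (lam : ℝ)
    (u v : ℝ →ᵇ (Fin n → ℝ)) (t : ℝ) : Iop A lam u t - Iop A lam v t = Iop A lam (u - v) t := by
  unfold Iop
  rw [← intervalIntegral.integral_sub
    ((Iop_integrand_cont A lam u).intervalIntegrable _ _)
    ((Iop_integrand_cont A lam v).intervalIntegrable _ _)]
  congr 1; ext1 s
  rw [← map_sub]; congr 1
  ext θ i
  simp [seg_apply, Xu, mul_sub]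

theorem exists_hom {τ : ℝ} (hτ : 0 < τ) (A : EE τ n →L[ℝ] (Fin n → ℝ)) (φ : EE τ n) :
    ∃ (x : ℝ → (Fin n → ℝ)) (hx : Continuous x), seg τ x hx 0 = φ ∧
      (∀ s : ℝ, 0 ≤ s → HasDerivWithinAt x (A (seg τ x hx s)) (Set.Ici 0) s) ∧
      ∀ t, 0 ≤ t → ∀ s ≤ t, ‖x s‖ ≤ 2 * Real.exp ((2 * ‖A‖ + 1) * t) * ‖φ‖ := by
  set lam := 2 * ‖A‖ + 1 with hlam
  have hl : 2 * ‖A‖ < lam := by linarith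
  have hl0 : 0 < lam := by positivity
  let φt : ℝ → (Fin n → ℝ) := Set.IccExtend (by linarith : -τ ≤ 0) φ
  have hφt : Continuous φt := φ.continuous.Icc_extend'
  have hφb : ∀ t, ‖φt t‖ ≤ ‖φ‖ := fun t => φ.norm_coe_le_norm _
  have hE1 : ∀ t, 1 ≤ Ew lam t := fun t => Real.one_le_exp (by positivity)
  let Φ : BoundedContinuousFunction ℝ (Fin n → ℝ) → BoundedContinuousFunction ℝ (Fin n → ℝ) :=
    fun u => BoundedContinuousFunction.ofNormedAddCommGroup
      (fun t => (Ew lam t)⁻¹ • (φt t + Iop A lam u t))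
      (((Ew_cont lam).inv₀ (fun t => (Ew_pos lam t).ne')).smul (hφt.add (Iop_cont A lam u)))
      (‖φ‖ + ‖u‖ / 2) (by
        intro t
        rw [norm_smul, norm_inv, Real.norm_of_nonneg (Ew_pos _ _).le,
          inv_mul_le_iff₀ (Ew_pos _ _)]
        refine (norm_add_le _ _).trans ?_
        have := Iop_bound A lam hl u t
        nlinarith [hφb t, hE1 t, norm_nonneg φ])
  have hΦ : ∀ u t, Φ u t = (Ew lam t)⁻¹ • (φt t + Iop A lam u t) := fun u t => rfl
  have hc : ContractingWith (1/2) Φ := by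
    refine ⟨by rw [← NNReal.coe_lt_coe]; norm_num, LipschitzWith.of_dist_le_mul fun u v => ?_⟩
    rw [BoundedContinuousFunction.dist_le (by positivity)]
    intro t
    rw [dist_eq_norm, hΦ, hΦ, ← smul_sub, add_sub_add_left_eq_sub, Iop_sub, norm_smul, norm_inv,
      Real.norm_of_nonneg (Ew_pos _ _).le, inv_mul_le_iff₀ (Ew_pos _ _), dist_eq_norm]
    refine (Iop_bound A lam hl (u - v) t).trans (le_of_eq ?_)
    push_cast; ring
  set u := hc.fixedPoint Φ with hu
  have hfix : Φ u = u := hc.fixedPoint_isFixedPt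
  have hX : ∀ t, Xu lam u t = φt t + Iop A lam u t := by
    intro t
    rw [Xu]; nth_rw 1 [← hfix]; rw [hΦ, smul_smul, mul_inv_cancel₀ (Ew_pos _ _).ne', one_smul]
  have hun : ‖u‖ ≤ 2 * ‖φ‖ := by
    have : ‖u‖ ≤ ‖φ‖ + ‖u‖ / 2 := by
      nth_rw 1 [← hfix]
      exact BoundedContinuousFunction.norm_ofNormedAddCommGroup_le _ (by positivity) _
    linarith
  refine ⟨Xu lam u, Xu_cont lam u, ?_, ?_, ?_⟩
  · ext1 θ
    rw [seg_apply, hX]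
    have : max ((0:ℝ) + θ) 0 = 0 := by simpa using θ.2.2
    rw [Iop, this, intervalIntegral.integral_same, add_zero, zero_add]
    exact Set.IccExtend_val (by linarith : -τ ≤ 0) _ _
  · intro s hs
    have h1 : HasDerivAt (fun T => φ ⟨0, by constructor <;> linarith⟩ +
        ∫ r in (0:ℝ)..T, A (seg τ (Xu lam u) (Xu_cont lam u) r))
        (A (seg τ (Xu lam u) (Xu_cont lam u) s)) s := by
      apply HasDerivAt.const_add
      have hcc := Iop_integrand_cont A lam u
      exact intervalIntegral.integral_hasDerivAt_right (hcc.intervalIntegrable _ _)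
        (hcc.stronglyMeasurableAtFilter _ _) hcc.continuousAt
    refine h1.hasDerivWithinAt.congr ?_ ?_
    · intro t ht
      rw [hX, Iop, max_eq_left ht]
      congr 1
      exact Set.IccExtend_of_right_le _ _ ht
    · rw [hX, Iop, max_eq_left hs]
      congr 1
      exact Set.IccExtend_of_right_le _ _ hs
  · intro t ht s hst
    rw [Xu, norm_smul, Real.norm_of_nonneg (Ew_pos _ _).le, Ew]
    have h1 : Real.exp (lam * max s 0) ≤ Real.exp (lam * t) := by
      gcongr; exact max_le hst ht
    have h2 := u.norm_coe_le_norm s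
    calc _ ≤ Real.exp (lam * t) * (2 * ‖φ‖) :=
          mul_le_mul h1 (h2.trans hun) (norm_nonneg _) (Real.exp_pos _).le
      _ = _ := by ring

theorem decay_of_half (b : ℝ → ℝ) (K t1 : ℝ) (hK : 0 ≤ K) (ht1 : 0 < t1) (hb : ∀ t, 0 ≤ b t)
    (h1 : ∀ s t, 0 ≤ s → 0 ≤ t → b (s + t) ≤ K * b s)
    (h2 : ∀ s, 0 ≤ s → b (s + t1) ≤ (1/2) * b s) (t : ℝ) (ht : 0 ≤ t) :
    b t ≤ 2 * K * Real.exp (-(Real.log 2 / t1) * t) * b 0 := by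
  have hk : ∀ k : ℕ, b (k * t1) ≤ (1/2)^k * b 0 := by
    intro k
    induction k with
    | zero => simp
    | succ k ih =>
      have := h2 (k * t1) (by positivity)
      push_cast
      rw [show ((k:ℝ) + 1) * t1 = k * t1 + t1 by ring, pow_succ]
      linarith
  set k := ⌊t / t1⌋₊ with hkdef
  have e1 : (k : ℝ) * t1 ≤ t := by
    have := Nat.floor_le (show 0 ≤ t / t1 by positivity)
    rwa [le_div_iff₀ ht1] at this
  have e2 : t < (k + 1) * t1 := by
    have := Nat.lt_floor_add_one (t / t1)
    rwa [div_lt_iff₀ ht1] at this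
  have e3 : b t ≤ K * b (k * t1) := by
    have := h1 (k * t1) (t - k * t1) (by positivity) (by linarith)
    simpa using this
  have e4 : ((1:ℝ)/2)^k ≤ 2 * Real.exp (-(Real.log 2 / t1) * t) := by
    have hl : 0 < Real.log 2 := Real.log_pos (by norm_num)
    have : ((1:ℝ)/2)^k = Real.exp (-(Real.log 2) * k) := by
      rw [mul_comm, Real.exp_nat_mul, Real.exp_neg, Real.exp_log (by norm_num)]; norm_num
    rw [this]
    have h22 : (2:ℝ) = Real.exp (Real.log 2) := (Real.exp_log (by norm_num)).symm
    nth_rw 2 [h22]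
    rw [← Real.exp_add]
    apply Real.exp_le_exp.2
    have : Real.log 2 / t1 * t ≤ Real.log 2 * (k + 1) := by
      rw [div_mul_eq_mul_div, div_le_iff₀ ht1]
      nlinarith
    linarith
  calc b t ≤ K * b (k * t1) := e3
    _ ≤ K * ((1/2)^k * b 0) := by gcongr; exact hk k
    _ ≤ K * ((2 * Real.exp (-(Real.log 2 / t1) * t)) * b 0) := by
        gcongr; exact hb 0
    _ = _ := by ring

open NNReal in
theorem lin_decay {τ : ℝ} (hτ : 0 < τ)
    (Atil : EE τ n →L[ℝ] (Fin n → ℝ))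
    (G : ℝ → HSp τ n →L[ℝ] HSp τ n)
    (hGadd : ∀ t s : ℝ, 0 ≤ t → 0 ≤ s → G (t + s) = (G t).comp (G s))
    (e : EE τ n →L[ℝ] HSp τ n) (he_inj : Function.Injective e)
    (hG_delay : ∀ (x : ℝ → (Fin n → ℝ)) (hx : Continuous x),
      (∀ s : ℝ, 0 ≤ s → HasDerivWithinAt x (Atil (seg τ x hx s)) (Set.Ici 0) s) →
      ∀ t : ℝ, 0 ≤ t → G t (e (seg τ x hx 0)) = e (seg τ x hx t))
    (ν : ℝ) (hν : 0 ≤ ν)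
    (GE : ℝ → EE τ n → EE τ n)
    (hGE : ∀ t : ℝ, 0 ≤ t → ∀ φ : EE τ n, e (GE t φ) = G t (e φ))
    (hstab : ∀ v₀ : EE τ n,
      Tendsto (fun t : ℝ => Real.exp (ν * t) * ‖GE t v₀‖) atTop (𝓝 0)) :
    ∃ M > (0:ℝ), ∃ ε > (0:ℝ), ∀ φ : EE τ n, ∃ (x : ℝ → (Fin n → ℝ)) (hx : Continuous x),
      seg τ x hx 0 = φ ∧
      (∀ s : ℝ, 0 ≤ s → HasDerivWithinAt x (Atil (seg τ x hx s)) (Set.Ici 0) s) ∧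
      ∀ t, 0 ≤ t → ‖seg τ x hx t‖ ≤ M * Real.exp (-(ν + ε) * t) * ‖φ‖ := by
  have hxs := fun φ => exists_hom hτ Atil φ
  choose X hXc hX0 hXd hXb using hxs
  set lam := 2 * ‖Atil‖ + 1 with hlam
  have hl0 : 0 < lam := by positivity
  have hGX : ∀ φ t, 0 ≤ t → GE t φ = seg τ (X φ) (hXc φ) t := by
    intro φ t ht
    apply he_inj
    rw [hGE t ht, ← hG_delay _ (hXc φ) (hXd φ) t ht, hX0]
  have hGEb : ∀ φ t, 0 ≤ t → ‖GE t φ‖ ≤ 2 * Real.exp (lam * t) * ‖φ‖ := by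
    intro φ t ht
    rw [hGX φ t ht]
    exact norm_seg_le _ _ _ _ _ (by positivity) fun s _ hs => hXb φ t ht s hs
  let T : ℝ≥0 → EE τ n →L[ℝ] EE τ n := fun t =>
    LinearMap.mkContinuous
      { toFun := GE t
        map_add' := fun a b => he_inj (by simp [hGE t t.2])
        map_smul' := fun c a => he_inj (by simp [hGE t t.2]) }
      (2 * Real.exp (lam * t)) (fun φ => hGEb φ t t.2)
  have hT : ∀ t φ, T t φ = GE t φ := fun t φ => rfl
  have hsem : ∀ s t : ℝ, 0 ≤ s → 0 ≤ t → ∀ φ, GE (s + t) φ = GE s (GE t φ) := by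
    intro s t hs ht φ
    apply he_inj
    rw [hGE _ (by positivity), hGE s hs, hGE t ht, hGadd s t hs ht]; rfl
  obtain ⟨K, hK⟩ : ∃ K, ∀ t : ℝ≥0, ‖Real.exp (ν * t) • T t‖ ≤ K := by
    apply banach_steinhaus
    intro φ
    have h1 : ∀ᶠ t in atTop, Real.exp (ν * t) * ‖GE t φ‖ < 1 :=
      (hstab φ).eventually (gt_mem_nhds one_pos)
    obtain ⟨t0, ht0⟩ := eventually_atTop.1 h1
    refine ⟨max 1 (Real.exp (ν * t0) * (2 * Real.exp (lam * t0) * ‖φ‖)), fun t => ?_⟩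
    rw [_root_.smul_apply, norm_smul, Real.norm_of_nonneg (Real.exp_pos _).le, hT]
    rcases le_total t0 t with h | h
    · exact (ht0 t h).le.trans (le_max_left _ _)
    · refine le_trans ?_ (le_max_right _ _)
      refine mul_le_mul (by gcongr) ((hGEb φ t t.2).trans (by gcongr)) (norm_nonneg _)
        (Real.exp_pos _).le
  have hK0 : 0 ≤ K := le_trans (ContinuousLinearMap.opNorm_nonneg _) (hK 0)
  have hKb : ∀ t, 0 ≤ t → ∀ φ, Real.exp (ν * t) * ‖GE t φ‖ ≤ K * ‖φ‖ := by
    intro t ht φ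
    have := (Real.exp (ν * t) • T ⟨t, ht⟩).le_of_opNorm_le (hK ⟨t, ht⟩) φ
    rwa [_root_.smul_apply, norm_smul, Real.norm_of_nonneg (Real.exp_pos _).le]
      at this
  -- compactness
  let S : Set (EE τ n) := {ψ | ∃ φ : EE τ n, ‖φ‖ ≤ 1 ∧ GE τ φ = ψ}
  set c := 2 * Real.exp (lam * τ) with hc
  have hc0 : 0 < c := by positivity
  have hlip : ∀ ψ ∈ S, ∀ a b, dist (ψ a) (ψ b) ≤ (‖Atil‖ * c) * dist a b := by
    rintro ψ ⟨φ, hφ, rfl⟩ a b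
    rw [hGX φ τ hτ.le, seg_apply, seg_apply, dist_comm, dist_comm a b, dist_eq_norm,
      Subtype.dist_eq, dist_eq_norm]
    have := (convex_Icc (0:ℝ) τ).norm_image_sub_le_of_norm_hasDerivWithin_le
      (f := X φ) (f' := fun s => Atil (seg τ (X φ) (hXc φ) s)) (C := ‖Atil‖ * c)
      (x := τ + a) (y := τ + b)
      (fun s hs => (hXd φ s hs.1).mono Set.Icc_subset_Ici_self) (fun s hs => ?_)
      ⟨by linarith [a.2.1], by linarith [a.2.2]⟩ ⟨by linarith [b.2.1], by linarith [b.2.2]⟩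
    · simpa using this
    · refine (Atil.le_opNorm _).trans ?_
      gcongr
      rw [← hGX φ s hs.1]
      refine (hGEb φ s hs.1).trans ?_
      calc 2 * Real.exp (lam * s) * ‖φ‖ ≤ 2 * Real.exp (lam * τ) * 1 := by
            gcongr; exact hs.2
        _ = c := by ring
  let J := ContinuousMap.isometryEquivBoundedOfCompact (Set.Icc (-τ) (0:ℝ)) (Fin n → ℝ)
  have hcomp : IsCompact (closure (J '' S)) := by
    refine BoundedContinuousFunction.arzela_ascoli (Metric.closedBall 0 c)
      (isCompact_closedBall _ _) _ ?_ ?_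
    · rintro f x ⟨ψ, ⟨φ, hφ, rfl⟩, rfl⟩
      rw [mem_closedBall_zero_iff]
      refine ((GE τ φ).norm_coe_le_norm x).trans ((hGEb φ τ hτ.le).trans ?_)
      nlinarith
    · refine Metric.equicontinuous_of_continuity_modulus (fun d => (‖Atil‖ * c) * d) ?_ _ ?_
      · have : Continuous (fun d : ℝ => (‖Atil‖ * c) * d) := by fun_prop
        simpa using this.tendsto 0
      · rintro a b ⟨f, ψ, hψ, rfl⟩
        exact hlip ψ hψ a b
  have htb : TotallyBounded S := by
    have h1 : TotallyBounded (J '' S) := hcomp.totallyBounded.subset subset_closure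
    have h2 := h1.image J.symm.isometry.uniformContinuous
    rwa [← Set.image_comp, show (J.symm ∘ J : EE τ n → EE τ n) = id from
      funext fun x => J.symm_apply_apply x, Set.image_id] at h2
  set η := Real.exp (-(ν * τ)) / 2 with hη
  have hη0 : 0 < η := by positivity
  obtain ⟨N, hNf, hN⟩ := Metric.totallyBounded_iff.1 htb (η / (2 * (K + 1))) (by positivity)
  have hev : ∀ᶠ t in atTop, ∀ y ∈ N, Real.exp (ν * t) * ‖GE t y‖ < η / 2 :=
    (eventually_all_finite hNf).2 fun y _ => (hstab y).eventually (gt_mem_nhds (by positivity))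
  obtain ⟨t0, ht0, ht00⟩ := (hev.and (eventually_ge_atTop 0)).exists
  have hhalf1 : ∀ φ : EE τ n, ‖φ‖ ≤ 1 → Real.exp (ν * (t0 + τ)) * ‖GE (t0 + τ) φ‖ ≤ 1/2 := by
    intro φ hφ
    have hmem : GE τ φ ∈ S := ⟨φ, hφ, rfl⟩
    obtain ⟨y, hy, hyb⟩ := Set.mem_iUnion₂.1 (hN hmem)
    rw [Metric.mem_ball, dist_eq_norm] at hyb
    have e1 : GE t0 (GE τ φ) = GE t0 y + GE t0 (GE τ φ - y) := by
      have h := (T ⟨t0, ht00⟩).map_add y (GE τ φ - y)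
      rw [add_sub_cancel] at h
      exact h
    have e2 := hKb t0 ht00 (GE τ φ - y)
    have e3 : K * ‖GE τ φ - y‖ ≤ η / 2 := by
      have : K * ‖GE τ φ - y‖ ≤ (K + 1) * (η / (2 * (K + 1))) := by gcongr; linarith
      refine this.trans (le_of_eq ?_); field_simp
    have e4 : Real.exp (ν * t0) * ‖GE t0 (GE τ φ)‖ ≤ η := by
      rw [e1]
      have := norm_add_le (GE t0 y) (GE t0 (GE τ φ - y))
      have h5 := ht0 y hy
      have h6 := Real.exp_pos (ν * t0)
      nlinarith
    rw [hsem t0 τ ht00 hτ.le, mul_add, Real.exp_add]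
    calc Real.exp (ν * t0) * Real.exp (ν * τ) * ‖GE t0 (GE τ φ)‖
        = Real.exp (ν * τ) * (Real.exp (ν * t0) * ‖GE t0 (GE τ φ)‖) := by ring
      _ ≤ Real.exp (ν * τ) * η := by gcongr
      _ = 1/2 := by rw [hη, Real.exp_neg]; field_simp
  have hhalf : ∀ φ : EE τ n, Real.exp (ν * (t0 + τ)) * ‖GE (t0 + τ) φ‖ ≤ 1/2 * ‖φ‖ := by
    intro φ
    have ht : 0 ≤ t0 + τ := by positivity
    have := (Real.exp (ν * (t0 + τ)) • T ⟨t0 + τ, ht⟩).opNorm_le_of_unit_norm (C := 1/2)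
      (by norm_num) (fun ψ hψ => by
        rw [_root_.smul_apply, norm_smul, Real.norm_of_nonneg (Real.exp_pos _).le]
        exact hhalf1 ψ hψ.le)
    have h2 := (Real.exp (ν * (t0 + τ)) • T ⟨t0 + τ, ht⟩).le_of_opNorm_le this φ
    rwa [_root_.smul_apply, norm_smul, Real.norm_of_nonneg (Real.exp_pos _).le]
      at h2
  have ht1 : 0 < t0 + τ := by positivity
  refine ⟨2 * K + 1, by positivity, Real.log 2 / (t0 + τ),
    div_pos (Real.log_pos (by norm_num)) ht1, fun φ =>
    ⟨X φ, hXc φ, hX0 φ, hXd φ, fun t ht => ?_⟩⟩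
  have key := decay_of_half (fun t => Real.exp (ν * t) * ‖GE t φ‖) K (t0 + τ) hK0 ht1
    (fun t => by positivity)
    (fun s t hs ht => by
      have := hKb t ht (GE s φ)
      rw [add_comm s t, hsem t s ht hs, mul_add, Real.exp_add]
      have h6 := Real.exp_pos (ν * s)
      nlinarith)
    (fun s hs => by
      have := hhalf (GE s φ)
      rw [add_comm s, hsem _ s ht1.le hs, mul_add, Real.exp_add]
      have h6 := Real.exp_pos (ν * s)
      nlinarith) t ht
  have hz : GE 0 φ = φ := by rw [hGX φ 0 le_rfl, hX0]
  simp only [hz, mul_zero, Real.exp_zero, one_mul] at key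
  rw [← hGX φ t ht]
  rw [show -(ν + Real.log 2 / (t0 + τ)) * t = -(ν * t) + -(Real.log 2 / (t0 + τ)) * t by ring,
    Real.exp_add, Real.exp_neg]
  have h6 := Real.exp_pos (ν * t)
  have h7 := Real.exp_pos (-(Real.log 2 / (t0 + τ)) * t)
  have : (2 * K + 1) * ((Real.exp (ν * t))⁻¹ * Real.exp (-(Real.log 2 / (t0 + τ)) * t)) * ‖φ‖
    = (Real.exp (ν * t))⁻¹ * ((2 * K + 1) * Real.exp (-(Real.log 2 / (t0 + τ)) * t) * ‖φ‖) := by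
    ring
  rw [this, ← div_eq_inv_mul, le_div_iff₀' h6]
  refine key.trans ?_
  gcongr; linarith

theorem mv_im {k : ℕ} (M : Matrix (Fin k) (Fin n) ℂ) (w : Fin n → ℂ) (i : Fin k) :
    (M.mulVec ((-Complex.I) • w) i).re = (M.mulVec w i).im := by
  rw [Matrix.mulVec_smul]; simp

theorem expSegRe_cont (τ : ℝ) :
    Continuous fun q : ℂ × (Fin n → ℂ) => expSegRe τ q.1 q.2 := by
  apply ContinuousMap.continuous_of_continuous_uncurry
  apply continuous_pi
  intro i
  simp only [Function.uncurry, expSegRe, ContinuousMap.coe_mk]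
  fun_prop

theorem mv_cont {τ : ℝ} {k : ℕ} (L : EE τ n →L[ℝ] (Fin k → ℝ))
    (M : ℂ → Matrix (Fin k) (Fin n) ℂ)
    (hM : ∀ (p : ℂ) (w : Fin n → ℂ), L (expSegRe τ p w) = fun i => ((M p).mulVec w i).re) :
    Continuous fun q : ℂ × (Fin n → ℂ) => (M q.1).mulVec q.2 := by
  have hc : Continuous fun q : ℂ × (Fin n → ℂ) => L (expSegRe τ q.1 q.2) :=
    L.continuous.comp (expSegRe_cont τ)
  apply continuous_pi
  intro i
  have h1 : Continuous fun q : ℂ × (Fin n → ℂ) => ((M q.1).mulVec q.2 i).re := by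
    have := (continuous_apply i).comp hc
    refine this.congr fun q => ?_
    simp [hM]
  have h2 : Continuous fun q : ℂ × (Fin n → ℂ) => ((M q.1).mulVec q.2 i).im := by
    have h3 : Continuous fun q : ℂ × (Fin n → ℂ) => (q.1, (-Complex.I) • q.2) := by fun_prop
    refine (h1.comp h3).congr fun q => ?_
    simp only [Function.comp]
    exact mv_im _ _ _
  have h4 := (Complex.continuous_ofReal.comp h1).add
    ((Complex.continuous_ofReal.comp h2).mul (continuous_const : Continuous fun _ : ℂ × (Fin n → ℂ) => Complex.I))
  refine h4.congr fun q => ?_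
  exact Complex.re_add_im _

theorem norm_expSegRe_le {τ : ℝ} (ν : ℝ) (hν : 0 ≤ ν) (p : ℂ) (hp : p.re = -ν)
    (w : Fin n → ℂ) : ‖expSegRe τ p w‖ ≤ Real.exp (ν * τ) * ‖w‖ := by
  rw [ContinuousMap.norm_le _ (by positivity)]
  intro θ
  rw [pi_norm_le_iff_of_nonneg (by positivity)]
  intro i
  simp only [expSegRe, ContinuousMap.coe_mk]
  refine (Complex.abs_re_le_norm _).trans ?_
  rw [norm_mul, Complex.norm_exp]
  gcongr
  · simp [hp]
    nlinarith [θ.2.1]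
  · exact norm_le_pi_norm w i

theorem mv_bound {τ : ℝ} {k : ℕ} (L : EE τ n →L[ℝ] (Fin k → ℝ))
    (M : ℂ → Matrix (Fin k) (Fin n) ℂ)
    (hM : ∀ (p : ℂ) (w : Fin n → ℂ), L (expSegRe τ p w) = fun i => ((M p).mulVec w i).re)
    (ν : ℝ) (hν : 0 ≤ ν) :
    ∃ c, 0 ≤ c ∧ ∀ p : ℂ, p.re = -ν → ∀ w, ‖(M p).mulVec w‖ ≤ c * ‖w‖ := by
  refine ⟨2 * (‖L‖ * Real.exp (ν * τ)), by positivity, fun p hp w => ?_⟩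
  rw [pi_norm_le_iff_of_nonneg (by positivity)]
  intro i
  have key : ∀ w : Fin n → ℂ, |((M p).mulVec w i).re| ≤ ‖L‖ * Real.exp (ν * τ) * ‖w‖ := by
    intro w
    have h1 := norm_le_pi_norm (L (expSegRe τ p w)) i
    rw [hM, Real.norm_eq_abs] at h1
    refine h1.trans ?_
    rw [← hM]
    refine (L.le_opNorm _).trans ?_
    rw [mul_assoc]
    gcongr
    exact norm_expSegRe_le ν hν p hp w
  have h1 := key w
  have h2 := key ((-Complex.I) • w)
  rw [mv_im, norm_smul] at h2
  simp at h2
  have := Complex.norm_le_abs_re_add_abs_im ((M p).mulVec w i)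
  linarith

theorem sq_sum_le {k : ℕ} {E : Type*} [NormedAddCommGroup E] (v : Fin k → E) (c : ℝ)
    (hc : ‖v‖ ≤ c) : ∑ i, ‖v i‖ ^ 2 ≤ k * c ^ 2 := by
  have h : ∀ i, ‖v i‖ ^ 2 ≤ c ^ 2 := fun i => by
    gcongr; exact (norm_le_pi_norm v i).trans hc
  calc ∑ i, ‖v i‖ ^ 2 ≤ ∑ _i : Fin k, c ^ 2 := Finset.sum_le_sum fun i _ => h i
    _ = _ := by simp

theorem norm_sq_le_sum {k : ℕ} {E : Type*} [NormedAddCommGroup E] (v : Fin k → E) :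
    ‖v‖ ^ 2 ≤ ∑ i, ‖v i‖ ^ 2 := by
  have h0 : 0 ≤ ∑ i, ‖v i‖ ^ 2 := Finset.sum_nonneg fun i _ => by positivity
  have : ‖v‖ ≤ Real.sqrt (∑ i, ‖v i‖ ^ 2) := by
    rw [pi_norm_le_iff_of_nonneg (Real.sqrt_nonneg _)]
    intro i
    apply Real.le_sqrt_of_sq_le
    exact Finset.single_le_sum (f := fun i => ‖v i‖ ^ 2) (fun i _ => by positivity)
      (Finset.mem_univ i)
  calc ‖v‖ ^ 2 ≤ (Real.sqrt (∑ i, ‖v i‖ ^ 2)) ^ 2 := by gcongr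
    _ = _ := Real.sq_sqrt h0

theorem Gq_smul {r m : ℕ} (G1 : Matrix (Fin r) (Fin r) ℝ) (G2 : Matrix (Fin r) (Fin m) ℝ)
    (G3 : Matrix (Fin m) (Fin m) ℝ) (c : ℝ) (s : Fin r → ℝ) (x : Fin m → ℝ) :
    Gq G1 G2 G3 (c • s) (c • x) = c ^ 2 * Gq G1 G2 G3 s x := by
  simp only [Gq, Matrix.mulVec_smul, smul_dotProduct, dotProduct_smul, smul_eq_mul]
  ring

theorem GqC_smul {r m : ℕ} (G1 : Matrix (Fin r) (Fin r) ℝ) (G2 : Matrix (Fin r) (Fin m) ℝ)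
    (G3 : Matrix (Fin m) (Fin m) ℝ) (c : ℝ) (s : Fin r → ℂ) (x : Fin m → ℂ) :
    GqC G1 G2 G3 ((c:ℂ) • s) ((c:ℂ) • x) = c ^ 2 * GqC G1 G2 G3 s x := by
  simp only [GqC]
  rw [mul_add, ← Gq_smul, ← Gq_smul]
  congr 2 <;> ext i <;> simp

theorem Gq_cont {r m : ℕ} (G1 : Matrix (Fin r) (Fin r) ℝ) (G2 : Matrix (Fin r) (Fin m) ℝ)
    (G3 : Matrix (Fin m) (Fin m) ℝ) :
    Continuous fun q : (Fin r → ℝ) × (Fin m → ℝ) => Gq G1 G2 G3 q.1 q.2 := by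
  simp only [Gq, dotProduct, Matrix.mulVec]
  fun_prop

theorem GqC_cont {r m : ℕ} (G1 : Matrix (Fin r) (Fin r) ℝ) (G2 : Matrix (Fin r) (Fin m) ℝ)
    (G3 : Matrix (Fin m) (Fin m) ℝ) :
    Continuous fun q : (Fin r → ℂ) × (Fin m → ℂ) => GqC G1 G2 G3 q.1 q.2 := by
  simp only [GqC, Gq, dotProduct, Matrix.mulVec]
  fun_prop

set_option maxHeartbeats 1600000 in
theorem freq_uniform {τ : ℝ} {m r : ℕ}
    (Atil : EE τ n →L[ℝ] (Fin n → ℝ)) (Cop : EE τ n →L[ℝ] (Fin r → ℝ))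
    (Btil : Matrix (Fin n) (Fin m) ℝ)
    (G1 : Matrix (Fin r) (Fin r) ℝ) (G2 : Matrix (Fin r) (Fin m) ℝ)
    (G3 : Matrix (Fin m) (Fin m) ℝ)
    (αmat : ℂ → Matrix (Fin n) (Fin n) ℂ) (γmat : ℂ → Matrix (Fin r) (Fin n) ℂ)
    (hα : ∀ (p : ℂ) (w : Fin n → ℂ),
      Atil (expSegRe τ p w) = fun i => ((αmat p).mulVec w i).re)
    (hγ : ∀ (p : ℂ) (w : Fin n → ℂ),
      Cop (expSegRe τ p w) = fun i => ((γmat p).mulVec w i).re)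
    (ν : ℝ) (hν : 0 ≤ ν)
    (hroots : ∀ p : ℂ,
      (αmat p - p • (1 : Matrix (Fin n) (Fin n) ℂ)).det = 0 → p.re < -ν)
    (hfreq : ∀ ω : ℝ, ∃ δ > (0:ℝ), ∀ (ξ : Fin m → ℂ) (u : Fin n → ℂ),
      (αmat (Complex.I * ω - ν) - (Complex.I * ω - ν) •
          (1 : Matrix (Fin n) (Fin n) ℂ)).mulVec u =
        (Btil.map (fun x : ℝ => (x : ℂ))).mulVec ξ →
      GqC G1 G2 G3 (fun i => -((γmat (Complex.I * ω - ν)).mulVec u i)) ξ ≤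
        -δ * ∑ i, ‖ξ i‖ ^ 2) (L : ℝ) (hL : 0 ≤ L) :
    ∃ δ' > (0:ℝ), ∃ δ2 > (0:ℝ), ∀ (ω : ℝ) (ξ : Fin m → ℂ) (u : Fin n → ℂ),
      (αmat (Complex.I * ω - ν) - (Complex.I * ω - ν) •
          (1 : Matrix (Fin n) (Fin n) ℂ)).mulVec u =
        (Btil.map (fun x : ℝ => (x : ℂ))).mulVec ξ →
      GqC G1 G2 G3 (fun i => -((γmat (Complex.I * ω - ν)).mulVec u i)) ξ +
        δ' * (L * ∑ i, ‖(γmat (Complex.I * ω - ν)).mulVec u i‖ ^ 2 - ∑ i, ‖ξ i‖ ^ 2) +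
        δ2 * (∑ i, ‖ξ i‖ ^ 2 + ∑ i, ‖u i‖ ^ 2 +
          ∑ i, ‖(γmat (Complex.I * ω - ν)).mulVec u i‖ ^ 2 +
          ∑ i, ‖(αmat (Complex.I * ω - ν)).mulVec u i‖ ^ 2) ≤ 0 := by
  obtain ⟨a, ha0, ha⟩ := mv_bound Atil αmat hα ν hν
  obtain ⟨c, hc0, hc⟩ := mv_bound Cop γmat hγ ν hν
  have hpre : ∀ ω : ℝ, (Complex.I * ω - ν).re = -ν := fun ω => by simp
  set BC : Matrix (Fin n) (Fin m) ℂ := Btil.map (fun x : ℝ => (x : ℂ)) with hBC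
  obtain ⟨b, hb0, hb⟩ : ∃ b, 0 ≤ b ∧ ∀ ξ, ‖BC.mulVec ξ‖ ≤ b * ‖ξ‖ := by
    refine ⟨‖LinearMap.toContinuousLinearMap (Matrix.mulVecLin BC)‖, ?_, fun ξ => ?_⟩
    · positivity
    · exact (LinearMap.toContinuousLinearMap (Matrix.mulVecLin BC)).le_opNorm ξ
  -- the constant D
  set D : ℝ := 1 + m + n + (L + 1) * (r * c ^ 2) + n * a ^ 2 with hD
  have hrc : 0 ≤ r * c ^ 2 := by positivity
  have hna : 0 ≤ n * a ^ 2 := by positivity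
  have hLrc : 0 ≤ L * (r * c ^ 2) := by positivity
  have hD1 : 1 ≤ D := by
    have : (0:ℝ) ≤ m := by positivity
    have : (0:ℝ) ≤ n := by positivity
    rw [hD]; nlinarith
  have hγs : ∀ (ω : ℝ) u, ∑ i, ‖(γmat (Complex.I * ω - ν)).mulVec u i‖ ^ 2
      ≤ (r * c ^ 2) * ‖u‖ ^ 2 := fun ω u => by
    refine (sq_sum_le _ _ (hc _ (hpre ω) u)).trans (le_of_eq (by ring))
  have hαs : ∀ (ω : ℝ) u, ∑ i, ‖(αmat (Complex.I * ω - ν)).mulVec u i‖ ^ 2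
      ≤ (n * a ^ 2) * ‖u‖ ^ 2 := fun ω u => by
    refine (sq_sum_le _ _ (ha _ (hpre ω) u)).trans (le_of_eq (by ring))
  have hA1 : ∀ (ω : ℝ) u, L * ∑ i, ‖(γmat (Complex.I * ω - ν)).mulVec u i‖ ^ 2
      ≤ D * ‖u‖ ^ 2 := fun ω u => by
    have h1 := mul_le_mul_of_nonneg_left (hγs ω u) hL
    refine h1.trans ?_
    rw [← mul_assoc]
    gcongr
    have : (0:ℝ) ≤ m := by positivity
    have : (0:ℝ) ≤ n := by positivity
    rw [hD]; nlinarith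
  have hA2 : ∀ (ω : ℝ) u, ∑ i, ‖u i‖ ^ 2 +
      ∑ i, ‖(γmat (Complex.I * ω - ν)).mulVec u i‖ ^ 2 +
          ∑ i, ‖(αmat (Complex.I * ω - ν)).mulVec u i‖ ^ 2 ≤ D * ‖u‖ ^ 2 := fun ω u => by
    have h1 := sq_sum_le u _ le_rfl
    have h2 := hγs ω u
    have h3 := hαs ω u
    have : (n + r * c ^ 2 + n * a ^ 2) * ‖u‖ ^ 2 ≤ D * ‖u‖ ^ 2 := by
      gcongr
      have : (0:ℝ) ≤ m := by positivity
      rw [hD]; nlinarith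
    nlinarith
  have hA3 : ∀ ξ : Fin m → ℂ, ∑ i, ‖ξ i‖ ^ 2 ≤ D * ‖ξ‖ ^ 2 := fun ξ => by
    refine (sq_sum_le ξ _ le_rfl).trans ?_
    gcongr
    have : (0:ℝ) ≤ n := by positivity
    rw [hD]; nlinarith
  -- the frequency cutoff
  set R : ℝ := a + 2 * D * b with hR
  have hhigh : ∀ (ω : ℝ) (ξ : Fin m → ℂ) (u : Fin n → ℂ), R + 1 ≤ |ω| →
      (αmat (Complex.I * ω - ν) - (Complex.I * ω - ν) •
          (1 : Matrix (Fin n) (Fin n) ℂ)).mulVec u = BC.mulVec ξ →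
      D * ‖u‖ ^ 2 ≤ (1/2) * ‖ξ‖ ^ 2 := by
    intro ω ξ u hω hu
    have h1 : (Complex.I * ω - ν) • u = (αmat (Complex.I * ω - ν)).mulVec u - BC.mulVec ξ := by
      rw [← hu, Matrix.sub_mulVec, Matrix.smul_mulVec, Matrix.one_mulVec]; abel
    have h2 : ‖(Complex.I * ω - ν : ℂ)‖ * ‖u‖ ≤ a * ‖u‖ + b * ‖ξ‖ := by
      rw [← norm_smul, h1]
      exact (norm_sub_le _ _).trans (add_le_add (ha _ (hpre ω) u) (hb ξ))
    have h3 : |ω| ≤ ‖(Complex.I * ω - ν : ℂ)‖ := by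
      have := Complex.abs_im_le_norm (Complex.I * ω - ν)
      simpa using this
    have h4 : (2 * D * b + 1) * ‖u‖ ≤ b * ‖ξ‖ := by
      have : (R + 1) * ‖u‖ ≤ a * ‖u‖ + b * ‖ξ‖ :=
        le_trans (by gcongr; exact hω.trans h3) h2
      rw [hR] at this; linarith
    have h5 : 2 * D * ‖u‖ ≤ ‖ξ‖ := by
      rcases hb0.eq_or_lt with hb' | hb'
      · have : ‖u‖ ≤ 0 := by rw [← hb'] at h4; simpa using h4
        have : ‖u‖ = 0 := le_antisymm this (norm_nonneg _)
        rw [this]; simp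
      · have : b * (2 * D * ‖u‖) ≤ b * ‖ξ‖ := by nlinarith [norm_nonneg u]
        exact le_of_mul_le_mul_left this hb'
    have h6 : (2 * D * ‖u‖) ^ 2 ≤ ‖ξ‖ ^ 2 := by gcongr
    nlinarith [sq_nonneg ‖u‖, mul_nonneg (sub_nonneg.2 hD1) (sq_nonneg ‖u‖)]
  -- low frequency: compactness
  let Kset : Set (ℝ × ((Fin n → ℂ) × (Fin m → ℂ))) :=
    (Set.Icc (-(R+1)) (R+1) ×ˢ Metric.sphere 0 1) ∩
      {z | (αmat (Complex.I * z.1 - ν)).mulVec z.2.1 - (Complex.I * z.1 - ν) • z.2.1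
        = BC.mulVec z.2.2}
  have cα : Continuous fun z : ℝ × ((Fin n → ℂ) × (Fin m → ℂ)) =>
      (αmat (Complex.I * z.1 - ν)).mulVec z.2.1 :=
    (mv_cont Atil αmat hα).comp (g := fun q : ℂ × (Fin n → ℂ) => (αmat q.1).mulVec q.2)
      (f := fun z : ℝ × ((Fin n → ℂ) × (Fin m → ℂ)) => ((Complex.I * z.1 - ν : ℂ), z.2.1))
      (by fun_prop)
  have cγ : Continuous fun z : ℝ × ((Fin n → ℂ) × (Fin m → ℂ)) =>
      (γmat (Complex.I * z.1 - ν)).mulVec z.2.1 :=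
    (mv_cont Cop γmat hγ).comp (g := fun q : ℂ × (Fin n → ℂ) => (γmat q.1).mulVec q.2)
      (f := fun z : ℝ × ((Fin n → ℂ) × (Fin m → ℂ)) => ((Complex.I * z.1 - ν : ℂ), z.2.1))
      (by fun_prop)
  have hKc : IsCompact Kset := by
    refine (isCompact_Icc.prod (isCompact_sphere _ _)).inter_right (isClosed_eq ?_ ?_)
    · exact cα.sub (by fun_prop)
    · exact continuous_const.matrix_mulVec (continuous_snd.comp continuous_snd)
  let Φ : ℝ × ((Fin n → ℂ) × (Fin m → ℂ)) → ℝ := fun z =>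
    GqC G1 G2 G3 (fun i => -((γmat (Complex.I * z.1 - ν)).mulVec z.2.1 i)) z.2.2
  have cΦ : Continuous Φ :=
    (GqC_cont G1 G2 G3).comp (g := fun q : (Fin r → ℂ) × (Fin m → ℂ) => GqC G1 G2 G3 q.1 q.2)
      (f := fun z : ℝ × ((Fin n → ℂ) × (Fin m → ℂ)) =>
        ((fun i => -((γmat (Complex.I * z.1 - ν)).mulVec z.2.1 i)), z.2.2))
      (cγ.neg.prodMk (continuous_snd.comp continuous_snd))
  have hneg : ∀ z ∈ Kset, Φ z < 0 := by
    rintro ⟨ω, u, ξ⟩ ⟨⟨_, hz⟩, he⟩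
    have he' : (αmat (Complex.I * ω - ν) - (Complex.I * ω - ν) •
          (1 : Matrix (Fin n) (Fin n) ℂ)).mulVec u = BC.mulVec ξ := by
      rw [Matrix.sub_mulVec, Matrix.smul_mulVec, Matrix.one_mulVec]; exact he
    have hξ : ξ ≠ 0 := by
      rintro rfl
      rw [Matrix.mulVec_zero] at he'
      have hdet : (αmat (Complex.I * ω - ν) - (Complex.I * ω - ν) •
          (1 : Matrix (Fin n) (Fin n) ℂ)).det ≠ 0 := fun h => by
        have := hroots _ h
        rw [hpre] at this; exact lt_irrefl _ this
      have hu := Matrix.eq_zero_of_mulVec_eq_zero hdet he'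
      rw [hu] at hz
      simp at hz
    obtain ⟨δ, hδ, hδ'⟩ := hfreq ω
    refine (hδ' ξ u he').trans_lt ?_
    have h1 := norm_sq_le_sum ξ
    have h2 : 0 < ‖ξ‖ ^ 2 := by have := norm_pos_iff.2 hξ; positivity
    nlinarith
  obtain ⟨δ1, hδ1, hlow⟩ : ∃ δ1 > 0, ∀ z ∈ Kset, Φ z ≤ -δ1 := by
    rcases Kset.eq_empty_or_nonempty with h | h
    · exact ⟨1, one_pos, by simp [h]⟩
    · obtain ⟨z0, hz0, hmax⟩ := hKc.exists_isMaxOn h cΦ.continuousOn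
      exact ⟨-Φ z0, by linarith [hneg z0 hz0], fun z hz => by
        rw [neg_neg]; exact hmax hz⟩
  have hlow2 : ∀ (ω : ℝ) (ξ : Fin m → ℂ) (u : Fin n → ℂ), |ω| ≤ R + 1 →
      (αmat (Complex.I * ω - ν) - (Complex.I * ω - ν) •
          (1 : Matrix (Fin n) (Fin n) ℂ)).mulVec u = BC.mulVec ξ →
      GqC G1 G2 G3 (fun i => -((γmat (Complex.I * ω - ν)).mulVec u i)) ξ
        ≤ -δ1 * ‖(u, ξ)‖ ^ 2 := by
    intro ω ξ u hω hu
    set N := ‖(u, ξ)‖ with hN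
    rcases (norm_nonneg (u, ξ)).eq_or_lt with h0 | h0
    · rw [← hN] at h0
      have h1 : (u, ξ) = 0 := norm_eq_zero.1 (hN ▸ h0.symm)
      rw [Prod.mk_eq_zero] at h1
      rw [h1.1, h1.2, ← h0]
      simp [GqC, Gq]
    · rw [← hN] at h0
      have hmem : (ω, ((N⁻¹ : ℝ) : ℂ) • (u, ξ)) ∈ Kset := by
        refine ⟨⟨abs_le.1 hω, ?_⟩, ?_⟩
        · rw [mem_sphere_zero_iff_norm, norm_smul, Complex.norm_real, norm_inv,
            Real.norm_of_nonneg h0.le, ← hN, inv_mul_cancel₀ h0.ne']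
        · simp only [Set.mem_ofPred_eq, Prod.smul_fst, Prod.smul_snd, Matrix.mulVec_smul]
          rw [← hu, Matrix.sub_mulVec, Matrix.smul_mulVec, Matrix.one_mulVec, smul_sub,
            smul_comm]
      have h1 := hlow _ hmem
      have h2 : Φ (ω, ((N⁻¹ : ℝ) : ℂ) • (u, ξ)) = (N⁻¹)^2 *
          GqC G1 G2 G3 (fun i => -((γmat (Complex.I * ω - ν)).mulVec u i)) ξ := by
        rw [← GqC_smul]
        simp only [Φ, Prod.smul_snd, Prod.smul_fst, Matrix.mulVec_smul]
        congr 1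
        ext i
        simp
      rw [h2, inv_pow, inv_mul_le_iff₀ (by positivity)] at h1
      linarith
  refine ⟨δ1 / (2 * D), by positivity, δ1 / (4 * D * (D + 1)), by positivity, ?_⟩
  intro ω ξ u hu
  have b1 := hA1 ω u
  have b2 := hA2 ω u
  have b3 := hA3 ξ
  have b4 := norm_sq_le_sum ξ
  have hd' : 0 < δ1 / (2 * D) := by positivity
  have hd2 : 0 < δ1 / (4 * D * (D + 1)) := by positivity
  rcases le_total |ω| (R + 1) with hω | hω
  · have c1 := hlow2 ω ξ u hω hu
    set N := ‖(u, ξ)‖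
    have n1 : ‖u‖ ^ 2 ≤ N ^ 2 := by gcongr; exact norm_fst_le (u, ξ)
    have n2 : ‖ξ‖ ^ 2 ≤ N ^ 2 := by gcongr; exact norm_snd_le (u, ξ)
    have n3 : D * ‖u‖ ^ 2 ≤ D * N ^ 2 := by gcongr
    have n4 : D * ‖ξ‖ ^ 2 ≤ D * N ^ 2 := by gcongr
    have e1 := mul_le_mul_of_nonneg_left (show L * ∑ i, ‖(γmat (Complex.I * ω - ν)).mulVec u i‖ ^ 2
      - ∑ i, ‖ξ i‖ ^ 2 ≤ D * N ^ 2 by nlinarith [sq_nonneg ‖ξ‖]) hd'.le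
    have e2 := mul_le_mul_of_nonneg_left (show ∑ i, ‖ξ i‖ ^ 2 + ∑ i, ‖u i‖ ^ 2 +
          ∑ i, ‖(γmat (Complex.I * ω - ν)).mulVec u i‖ ^ 2 +
          ∑ i, ‖(αmat (Complex.I * ω - ν)).mulVec u i‖ ^ 2 ≤ 2 * D * N ^ 2 by linarith) hd2.le
    have f1 : δ1 / (2 * D) * (D * N ^ 2) = δ1 / 2 * N ^ 2 := by field_simp
    have f2 : δ1 / (4 * D * (D + 1)) * (2 * D * N ^ 2) ≤ δ1 / 2 * N ^ 2 := by
      have : δ1 / (4 * D * (D + 1)) * (2 * D * N ^ 2) = (δ1 / 2 * N ^ 2) / (D + 1) := by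
        field_simp; ring
      rw [this]
      apply div_le_self (by positivity) (by linarith)
    linarith
  · have c1 := hhigh ω ξ u hω hu
    obtain ⟨δ, hδ, hδ'⟩ := hfreq ω
    have c2 := hδ' ξ u hu
    have c3 : 0 ≤ δ * ∑ i, ‖ξ i‖ ^ 2 := by positivity
    have e1 := mul_le_mul_of_nonneg_left (show L * ∑ i, ‖(γmat (Complex.I * ω - ν)).mulVec u i‖ ^ 2
      - ∑ i, ‖ξ i‖ ^ 2 ≤ -(1/2) * ‖ξ‖ ^ 2 by linarith) hd'.le
    have e2 := mul_le_mul_of_nonneg_left (show ∑ i, ‖ξ i‖ ^ 2 + ∑ i, ‖u i‖ ^ 2 +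
          ∑ i, ‖(γmat (Complex.I * ω - ν)).mulVec u i‖ ^ 2 +
          ∑ i, ‖(αmat (Complex.I * ω - ν)).mulVec u i‖ ^ 2 ≤ (D + 1) * ‖ξ‖ ^ 2 by
            nlinarith [sq_nonneg ‖ξ‖]) hd2.le
    have f1 : δ1 / (2 * D) * (-(1/2) * ‖ξ‖ ^ 2) = -(δ1 / (4 * D) * ‖ξ‖ ^ 2) := by
      field_simp; ring
    have f2 : δ1 / (4 * D * (D + 1)) * ((D + 1) * ‖ξ‖ ^ 2) = δ1 / (4 * D) * ‖ξ‖ ^ 2 := by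
      have : D + 1 ≠ 0 := by positivity
      field_simp
    linarith

/-- complex frequency -/
def pf (ν ω : ℝ) : ℂ := Complex.I * ((2 * Real.pi * ω : ℝ) : ℂ) - ν

theorem pf_re (ν ω : ℝ) : (pf ν ω).re = -ν := by simp [pf]

theorem FT_weight (ν ω : ℝ) (f : ℝ → ℝ) :
    FT (fun t => Real.exp (ν * t) * f t) ω = ∫ t : ℝ, Complex.exp (-(pf ν ω * t)) * f t := by
  unfold FT
  congr 1
  ext1 t
  push_cast
  rw [← mul_assoc, ← Complex.exp_add]
  congr 2
  simp [pf]
  ring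

theorem norm_exp_pf (ν ω t : ℝ) : ‖Complex.exp (-(pf ν ω * t))‖ = Real.exp (ν * t) := by
  rw [Complex.norm_exp]; congr 1; simp [pf_re]

theorem int_weight {ν ε : ℝ} (hε : 0 < ε) (ω : ℝ) (f : ℝ → ℝ)
    (hf : Dc ε fun t => Real.exp (ν * t) * f t) :
    Integrable fun t : ℝ => Complex.exp (-(pf ν ω * t)) * f t := by
  have h1 := (hf.integrable hε).ofReal (𝕜 := ℂ)
  have h2 : Integrable fun t : ℝ => Complex.exp (-(2 * Real.pi * ω * t : ℝ) * Complex.I) *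
      ((Real.exp (ν * t) * f t : ℝ) : ℂ) := by
    refine h1.bdd_mul (c := 1) ?_ ?_
    · exact (by fun_prop : Continuous _).aestronglyMeasurable
    · refine Eventually.of_forall fun t => ?_
      rw [Complex.norm_exp]
      simp
  refine h2.congr (Eventually.of_forall fun t => ?_)
  simp only
  push_cast
  rw [← mul_assoc, ← Complex.exp_add]
  congr 2
  simp [pf]
  ring

theorem tendsto_exp_abs_top {ε : ℝ} (hε : 0 < ε) (C : ℝ) :
    Tendsto (fun t : ℝ => C * Real.exp (-ε * |t|)) atTop (𝓝 0) := by
  have : Tendsto (fun t : ℝ => -ε * |t|) atTop atBot :=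
    tendsto_abs_atTop_atTop.const_mul_atTop_of_neg (by linarith)
  simpa using (Real.tendsto_exp_atBot.comp this).const_mul C

theorem tendsto_exp_abs_bot {ε : ℝ} (hε : 0 < ε) (C : ℝ) :
    Tendsto (fun t : ℝ => C * Real.exp (-ε * |t|)) atBot (𝓝 0) := by
  have : Tendsto (fun t : ℝ => -ε * |t|) atBot atBot :=
    tendsto_abs_atBot_atTop.const_mul_atTop_of_neg (by linarith)
  simpa using (Real.tendsto_exp_atBot.comp this).const_mul C

theorem FT_deriv {ν ε : ℝ} (hε : 0 < ε) (ω : ℝ) (f d : ℝ → ℝ) (S : Set ℝ) (hS : S.Countable)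
    (hfc : Continuous f) (hd : ∀ t, t ∉ S → HasDerivAt f (d t) t)
    (hf : Dc ε fun t => Real.exp (ν * t) * f t) (hdd : Dc ε fun t => Real.exp (ν * t) * d t) :
    pf ν ω * FT (fun t => Real.exp (ν * t) * f t) ω = FT (fun t => Real.exp (ν * t) * d t) ω := by
  rw [FT_weight, FT_weight]
  set p := pf ν ω with hp
  have i1 := int_weight hε ω f hf
  have i2 := int_weight hε ω d hdd
  have i3 : Integrable fun t : ℝ => Complex.exp (-(p * t)) * d t -
      p * (Complex.exp (-(p * t)) * f t) := i2.sub (i1.const_mul p)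
  let g : ℝ → ℂ := fun t => Complex.exp (-(p * t)) * f t
  have hgc : Continuous g := by
    have : Continuous fun t => (f t : ℂ) := Complex.continuous_ofReal.comp hfc
    fun_prop
  have hgd : ∀ t, t ∉ S → HasDerivAt g (Complex.exp (-(p * t)) * d t -
      p * (Complex.exp (-(p * t)) * f t)) t := by
    intro t ht
    have h1 : HasDerivAt (fun t : ℝ => -(p * (t:ℂ))) (-(p * 1)) t :=
      ((Complex.ofRealCLM.hasDerivAt (x := t)).const_mul p).neg
    have h2 := h1.cexp.mul (hd t ht).ofReal_comp
    refine h2.congr_deriv ?_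
    ring
  obtain ⟨_, C, hC⟩ := hf
  have hgb : ∀ t, ‖g t‖ ≤ C * Real.exp (-ε * |t|) := by
    intro t
    have := hC t
    simp only [g]
    rw [norm_mul, norm_exp_pf, Complex.norm_real, Real.norm_eq_abs]
    rwa [abs_mul, abs_of_pos (Real.exp_pos _)] at this
  have t1 : Tendsto g atTop (𝓝 0) := squeeze_zero_norm hgb (tendsto_exp_abs_top hε C)
  have t2 : Tendsto g atBot (𝓝 0) := squeeze_zero_norm hgb (tendsto_exp_abs_bot hε C)
  have t3 := intervalIntegral_tendsto_integral i3 tendsto_neg_atTop_atBot tendsto_id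
  have t4 : Tendsto (fun T : ℝ => g T - g (-T)) atTop (𝓝 (0 - 0)) :=
    t1.sub (t2.comp tendsto_neg_atTop_atBot)
  have t5 : (fun T : ℝ => ∫ t in (-T)..(id T), (Complex.exp (-(p * t)) * d t -
      p * (Complex.exp (-(p * t)) * f t))) = fun T => g T - g (-T) := by
    ext1 T
    exact integral_eq_of_hasDerivAt_off_countable g _ hS hgc.continuousOn
      (fun x hx => hgd x hx.2) i3.intervalIntegrable
  rw [t5] at t3
  have t6 := tendsto_nhds_unique t3 t4
  rw [integral_sub i2 (i1.const_mul p), integral_const_mul] at t6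
  simp only [sub_zero] at t6
  exact (sub_eq_zero.1 t6).symm

theorem seg_decay {τ ν ε C : ℝ} (hτ : 0 < τ) (hν : 0 ≤ ν) (hε : 0 < ε)
    (y : ℝ → Fin n → ℝ) (hy : Continuous y)
    (hC : ∀ t, Real.exp (ν * t) * ‖y t‖ ≤ C * Real.exp (-ε * |t|)) (t : ℝ) :
    Real.exp (ν * t) * ‖seg τ y hy t‖ ≤
      (Real.exp (ν * τ) * Real.exp (ε * τ) * C) * Real.exp (-ε * |t|) := by
  have hC0 : 0 ≤ C := by
    have := (by positivity : 0 ≤ Real.exp (ν * 0) * ‖y 0‖).trans (hC 0)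
    simpa using this
  rw [← le_div_iff₀' (Real.exp_pos _)]
  apply norm_seg_le _ _ _ _ _ (by positivity)
  intro s h1 h2
  rw [le_div_iff₀' (Real.exp_pos _)]
  have e1 : Real.exp (ν * t) ≤ Real.exp (ν * τ) * Real.exp (ν * s) := by
    rw [← Real.exp_add]; apply Real.exp_le_exp.2; nlinarith
  have e2 : Real.exp (-ε * |s|) ≤ Real.exp (ε * τ) * Real.exp (-ε * |t|) := by
    rw [← Real.exp_add]; apply Real.exp_le_exp.2
    have : |t| ≤ τ + |s| := by
      have h3 : |t| ≤ |t - s| + |s| := by simpa using abs_add_le (t - s) s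
      have h4 : |t - s| ≤ τ := abs_le.2 ⟨by linarith, by linarith⟩
      linarith
    nlinarith
  calc Real.exp (ν * t) * ‖y s‖ ≤ (Real.exp (ν * τ) * Real.exp (ν * s)) * ‖y s‖ := by gcongr
    _ = Real.exp (ν * τ) * (Real.exp (ν * s) * ‖y s‖) := by ring
    _ ≤ Real.exp (ν * τ) * (C * (Real.exp (ε * τ) * Real.exp (-ε * |t|))) := by
        refine mul_le_mul_of_nonneg_left ?_ (Real.exp_pos _).le
        exact (hC s).trans (by gcongr)
    _ = _ := by ring

theorem Dc_seg {τ ν ε C : ℝ} {k : ℕ} (hτ : 0 < τ) (hν : 0 ≤ ν) (hε : 0 < ε)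
    (L : EE τ n →L[ℝ] (Fin k → ℝ))
    (y : ℝ → Fin n → ℝ) (hy : Continuous y)
    (hC : ∀ t, Real.exp (ν * t) * ‖y t‖ ≤ C * Real.exp (-ε * |t|)) (i : Fin k) :
    Dc ε fun t => Real.exp (ν * t) * L (seg τ y hy t) i := by
  have hc : Continuous fun t => L (seg τ y hy t) := L.continuous.comp (seg_continuous τ y hy)
  refine ⟨?_, ‖L‖ * (Real.exp (ν * τ) * Real.exp (ε * τ) * C), fun t => ?_⟩
  · have := (continuous_apply i).comp hc
    refine Continuous.aestronglyMeasurable ?_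
    exact (by fun_prop : Continuous fun t => Real.exp (ν * t)).mul this
  · rw [abs_mul, abs_of_pos (Real.exp_pos _)]
    have h1 : |L (seg τ y hy t) i| ≤ ‖L‖ * ‖seg τ y hy t‖ :=
      (norm_le_pi_norm (L (seg τ y hy t)) i).trans (L.le_opNorm _)
    have h2 := seg_decay hτ hν hε y hy hC t
    calc _ ≤ Real.exp (ν * t) * (‖L‖ * ‖seg τ y hy t‖) := by gcongr
      _ = ‖L‖ * (Real.exp (ν * t) * ‖seg τ y hy t‖) := by ring
      _ ≤ ‖L‖ * ((Real.exp (ν * τ) * Real.exp (ε * τ) * C) * Real.exp (-ε * |t|)) := by gcongr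
      _ = _ := by ring

theorem Dc_y {ν ε C : ℝ} (y : ℝ → Fin n → ℝ) (hy : Continuous y)
    (hC : ∀ t, Real.exp (ν * t) * ‖y t‖ ≤ C * Real.exp (-ε * |t|)) (i : Fin n) :
    Dc ε fun t => Real.exp (ν * t) * y t i := by
  refine ⟨?_, C, fun t => ?_⟩
  · exact Continuous.aestronglyMeasurable (by fun_prop)
  · rw [abs_mul, abs_of_pos (Real.exp_pos _)]
    refine le_trans ?_ (hC t)
    gcongr
    exact norm_le_pi_norm (y t) i

theorem FT_seg {τ ν ε C : ℝ} {k : ℕ} (hτ : 0 < τ) (hν : 0 ≤ ν) (hε : 0 < ε)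
    (L : EE τ n →L[ℝ] (Fin k → ℝ)) (M : ℂ → Matrix (Fin k) (Fin n) ℂ)
    (hM : ∀ (p : ℂ) (w : Fin n → ℂ), L (expSegRe τ p w) = fun i => ((M p).mulVec w i).re)
    (y : ℝ → Fin n → ℝ) (hy : Continuous y)
    (hC : ∀ t, Real.exp (ν * t) * ‖y t‖ ≤ C * Real.exp (-ε * |t|)) (ω : ℝ) (i : Fin k) :
    FT (fun t => Real.exp (ν * t) * L (seg τ y hy t) i) ω =
      (M (pf ν ω)).mulVec (fun j => FT (fun t => Real.exp (ν * t) * y t j) ω) i := by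
  set p := pf ν ω with hp
  set Yh : Fin n → ℂ := fun j => FT (fun t => Real.exp (ν * t) * y t j) ω with hYh
  have key : ∀ κ : ℂ, (κ * FT (fun t => Real.exp (ν * t) * L (seg τ y hy t) i) ω).re =
      (κ * (M p).mulVec Yh i).re := by
    intro κ
    let w : ℝ → ℝ := fun t => (κ * Complex.exp (-(p * t))).re
    have hwc : Continuous w := by
      apply Complex.continuous_re.comp; fun_prop
    have hwb : ∀ t, |w t| ≤ ‖κ‖ * Real.exp (ν * t) := fun t => by
      refine (Complex.abs_re_le_norm _).trans ?_
      rw [norm_mul, norm_exp_pf]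
    have hIntg : Integrable fun t => w t • seg τ y hy t := by
      refine ((integrable_exp_abs hε).const_mul
        (‖κ‖ * (Real.exp (ν * τ) * Real.exp (ε * τ) * C))).mono' ?_ ?_
      · exact (hwc.smul (seg_continuous τ y hy)).aestronglyMeasurable
      · refine Eventually.of_forall fun t => ?_
        rw [norm_smul, Real.norm_eq_abs]
        calc |w t| * ‖seg τ y hy t‖ ≤ (‖κ‖ * Real.exp (ν * t)) * ‖seg τ y hy t‖ := by
              gcongr; exact hwb t
          _ = ‖κ‖ * (Real.exp (ν * t) * ‖seg τ y hy t‖) := by ring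
          _ ≤ ‖κ‖ * ((Real.exp (ν * τ) * Real.exp (ε * τ) * C) * Real.exp (-ε * |t|)) := by
              exact mul_le_mul_of_nonneg_left (seg_decay hτ hν hε y hy hC t) (norm_nonneg _)
          _ = _ := by ring
    have hV : ∫ t, w t • seg τ y hy t = expSegRe τ p (κ • Yh) := by
      ext θ j
      let ev : EE τ n →L[ℝ] ℝ :=
        (ContinuousLinearMap.proj (R := ℝ) (φ := fun _ : Fin n => ℝ) j).comp
          (ContinuousMap.evalCLM ℝ θ)
      have hev : ∀ v : EE τ n, ev v = v θ j := fun v => rfl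
      rw [← hev, ← ContinuousLinearMap.integral_comp_comm ev hIntg]
      have h1 : ∀ t, ev (w t • seg τ y hy t) =
          (κ * Complex.exp (p * (θ:ℝ)) * (Complex.exp (-(p * ((t + θ : ℝ) : ℂ))) *
            (y (t + θ) j : ℂ))).re := by
        intro t
        rw [hev]
        have e1 : (w t • seg τ y hy t) θ j = w t * y (t + θ) j := rfl
        have e2 : Complex.exp (p * (θ:ℝ)) * Complex.exp (-(p * ((t + θ : ℝ) : ℂ))) =
            Complex.exp (-(p * t)) := by
          rw [← Complex.exp_add]; congr 1; push_cast; ring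
        rw [e1, ← mul_assoc, mul_assoc κ, e2, Complex.re_mul_ofReal]
      simp_rw [h1]
      have hi0 := (int_weight hε ω (fun t => y t j) (Dc_y y hy hC j)).const_mul
        (κ * Complex.exp (p * (θ:ℝ)))
      have hsh := integral_add_right_eq_self (μ := (volume : Measure ℝ)) (fun t : ℝ =>
        (κ * Complex.exp (p * (θ:ℝ)) * (Complex.exp (-(p * (t : ℂ))) * (y t j : ℂ))).re) (θ:ℝ)
      rw [hsh]
      have h3 := integral_re hi0
      simp only [RCLike.re_eq_complex_re] at h3
      rw [h3, integral_const_mul, ← FT_weight]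
      simp only [expSegRe, ContinuousMap.coe_mk, Pi.smul_apply, smul_eq_mul, hYh]
      congr 1
      ring
    have hL : L (∫ t, w t • seg τ y hy t) i =
        (κ * FT (fun t => Real.exp (ν * t) * L (seg τ y hy t) i) ω).re := by
      let ev : EE τ n →L[ℝ] ℝ :=
        (ContinuousLinearMap.proj (R := ℝ) (φ := fun _ : Fin k => ℝ) i).comp L
      have hev : ∀ v : EE τ n, ev v = L v i := fun v => rfl
      rw [← hev, ← ContinuousLinearMap.integral_comp_comm ev hIntg]
      have hi0 := (int_weight hε ω (fun t => L (seg τ y hy t) i)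
        (Dc_seg hτ hν hε L y hy hC i)).const_mul κ
      have h3 := integral_re hi0
      simp only [RCLike.re_eq_complex_re] at h3
      rw [FT_weight, ← integral_const_mul, ← h3]
      congr 1
      ext1 t
      rw [← mul_assoc, Complex.re_mul_ofReal, map_smul, hev]
      rfl
    rw [← hL, hV, hM, Matrix.mulVec_smul]
    simp
  apply Complex.ext
  · simpa using key 1
  · simpa using key (-Complex.I)

/-- The total quadratic form. -/
def Pq {r m : ℕ} (G1 : Matrix (Fin r) (Fin r) ℝ) (G2 : Matrix (Fin r) (Fin m) ℝ)
    (G3 : Matrix (Fin m) (Fin m) ℝ) (δ' L δ2 : ℝ) (s : Fin r → ℝ) (x : Fin m → ℝ)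
    (u a : Fin n → ℝ) : ℝ :=
  Gq G1 G2 G3 s x + δ' * (L * ∑ i, s i ^ 2 - ∑ i, x i ^ 2) +
    δ2 * (∑ i, x i ^ 2 + ∑ i, u i ^ 2 + ∑ i, s i ^ 2 + ∑ i, a i ^ 2)

theorem Gq_mod {r m : ℕ} (G1 : Matrix (Fin r) (Fin r) ℝ) (G2 : Matrix (Fin r) (Fin m) ℝ)
    (G3 : Matrix (Fin m) (Fin m) ℝ) (a b : ℝ) (s : Fin r → ℝ) (x : Fin m → ℝ) :
    Gq (G1 + a • (1 : Matrix (Fin r) (Fin r) ℝ)) G2 (G3 + b • (1 : Matrix (Fin m) (Fin m) ℝ)) s x =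
      Gq G1 G2 G3 s x + a * ∑ i, s i ^ 2 + b * ∑ i, x i ^ 2 := by
  simp only [Gq, Matrix.add_mulVec, Matrix.smul_mulVec, Matrix.one_mulVec, dotProduct_add,
    dotProduct_smul, smul_eq_mul]
  simp only [dotProduct, sq]
  ring

theorem GqC_mod {r m : ℕ} (G1 : Matrix (Fin r) (Fin r) ℝ) (G2 : Matrix (Fin r) (Fin m) ℝ)
    (G3 : Matrix (Fin m) (Fin m) ℝ) (a b : ℝ) (s : Fin r → ℂ) (x : Fin m → ℂ) :
    GqC (G1 + a • (1 : Matrix (Fin r) (Fin r) ℝ)) G2 (G3 + b • (1 : Matrix (Fin m) (Fin m) ℝ)) s x =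
      GqC G1 G2 G3 s x + a * ∑ i, ‖s i‖ ^ 2 + b * ∑ i, ‖x i‖ ^ 2 := by
  simp only [GqC, Gq_mod, Complex.sq_norm, Complex.normSq_apply, Finset.sum_add_distrib]
  simp only [sq]
  ring

theorem Gq_zero {r m : ℕ} (s : Fin r → ℝ) (x : Fin m → ℝ) :
    Gq (0 : Matrix (Fin r) (Fin r) ℝ) 0 0 s x = 0 := by simp [Gq]

theorem GqC_zero {r m : ℕ} (s : Fin r → ℂ) (x : Fin m → ℂ) :
    GqC (0 : Matrix (Fin r) (Fin r) ℝ) 0 0 s x = 0 := by simp [GqC, Gq_zero]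

theorem plancherel_energy {τ ν ε C : ℝ} {m r : ℕ} (hτ : 0 < τ) (hν : 0 ≤ ν) (hε : 0 < ε)
    (Atil : EE τ n →L[ℝ] (Fin n → ℝ)) (Cop : EE τ n →L[ℝ] (Fin r → ℝ))
    (Btil : Matrix (Fin n) (Fin m) ℝ)
    (G1 : Matrix (Fin r) (Fin r) ℝ) (G2 : Matrix (Fin r) (Fin m) ℝ)
    (G3 : Matrix (Fin m) (Fin m) ℝ)
    (αmat : ℂ → Matrix (Fin n) (Fin n) ℂ) (γmat : ℂ → Matrix (Fin r) (Fin n) ℂ)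
    (hα : ∀ (p : ℂ) (w : Fin n → ℂ),
      Atil (expSegRe τ p w) = fun i => ((αmat p).mulVec w i).re)
    (hγ : ∀ (p : ℂ) (w : Fin n → ℂ),
      Cop (expSegRe τ p w) = fun i => ((γmat p).mulVec w i).re)
    (δ' L δ2 : ℝ)
    (hU : ∀ (ω : ℝ) (ξ : Fin m → ℂ) (u : Fin n → ℂ),
      (αmat (Complex.I * ω - ν) - (Complex.I * ω - ν) •
          (1 : Matrix (Fin n) (Fin n) ℂ)).mulVec u =
        (Btil.map (fun x : ℝ => (x : ℂ))).mulVec ξ →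
      GqC G1 G2 G3 (fun i => -((γmat (Complex.I * ω - ν)).mulVec u i)) ξ +
        δ' * (L * ∑ i, ‖(γmat (Complex.I * ω - ν)).mulVec u i‖ ^ 2 - ∑ i, ‖ξ i‖ ^ 2) +
        δ2 * (∑ i, ‖ξ i‖ ^ 2 + ∑ i, ‖u i‖ ^ 2 +
          ∑ i, ‖(γmat (Complex.I * ω - ν)).mulVec u i‖ ^ 2 +
          ∑ i, ‖(αmat (Complex.I * ω - ν)).mulVec u i‖ ^ 2) ≤ 0)
    (y : ℝ → Fin n → ℝ) (hy : Continuous y)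
    (hC : ∀ t, Real.exp (ν * t) * ‖y t‖ ≤ C * Real.exp (-ε * |t|))
    (η : ℝ → Fin m → ℝ) (hη : ∀ j, Dc ε fun t => Real.exp (ν * t) * η t j)
    (S : Set ℝ) (hS : S.Countable)
    (hd : ∀ t, t ∉ S → HasDerivAt y (Atil (seg τ y hy t) + Btil.mulVec (η t)) t) :
    Integrable (fun t => Real.exp (ν * t) ^ 2 *
      Pq G1 G2 G3 δ' L δ2 (Cop (seg τ y hy t)) (η t) (y t) (Atil (seg τ y hy t))) ∧
    ∫ t, Real.exp (ν * t) ^ 2 *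
      Pq G1 G2 G3 δ' L δ2 (Cop (seg τ y hy t)) (η t) (y t) (Atil (seg τ y hy t)) ≤ 0 := by
  let Yw : ℝ → Fin n → ℝ := fun t => Real.exp (ν * t) • y t
  let aw : ℝ → Fin n → ℝ := fun t => Real.exp (ν * t) • Atil (seg τ y hy t)
  let sw : ℝ → Fin r → ℝ := fun t => Real.exp (ν * t) • Cop (seg τ y hy t)
  let xw : ℝ → Fin m → ℝ := fun t => Real.exp (ν * t) • η t
  have dY : ∀ i, Dc ε fun t => Yw t i := fun i => Dc_y y hy hC i
  have da : ∀ i, Dc ε fun t => aw t i := fun i => Dc_seg hτ hν hε Atil y hy hC i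
  have ds : ∀ i, Dc ε fun t => sw t i := fun i => Dc_seg hτ hν hε Cop y hy hC i
  have dx : ∀ i, Dc ε fun t => xw t i := hη
  obtain ⟨p1, p2, p3⟩ := FT_plancherel_Gq (G1 + (δ' * L + δ2) • (1 : Matrix (Fin r) (Fin r) ℝ)) G2
    (G3 + (δ2 - δ') • (1 : Matrix (Fin m) (Fin m) ℝ)) sw xw
    (fun i => ⟨(ds i).integrable hε, (ds i).memLp hε⟩)
    (fun i => ⟨(dx i).integrable hε, (dx i).memLp hε⟩)
  obtain ⟨q1, q2, q3⟩ := FT_plancherel_Gq (0 + δ2 • (1 : Matrix (Fin n) (Fin n) ℝ)) 0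
    (0 + δ2 • (1 : Matrix (Fin n) (Fin n) ℝ)) Yw aw
    (fun i => ⟨(dY i).integrable hε, (dY i).memLp hε⟩)
    (fun i => ⟨(da i).integrable hε, (da i).memLp hε⟩)
  have hP : (fun t => Real.exp (ν * t) ^ 2 *
      Pq G1 G2 G3 δ' L δ2 (Cop (seg τ y hy t)) (η t) (y t) (Atil (seg τ y hy t))) =
      fun t => Gq (G1 + (δ' * L + δ2) • (1 : Matrix (Fin r) (Fin r) ℝ)) G2
        (G3 + (δ2 - δ') • (1 : Matrix (Fin m) (Fin m) ℝ)) (sw t) (xw t) +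
        Gq (0 + δ2 • (1 : Matrix (Fin n) (Fin n) ℝ)) 0
          (0 + δ2 • (1 : Matrix (Fin n) (Fin n) ℝ)) (Yw t) (aw t) := by
    ext1 t
    simp only [sw, xw, Yw, aw]
    rw [Gq_smul, Gq_smul, Gq_mod, Gq_mod, Gq_zero, Pq]
    ring
  rw [hP]
  refine ⟨p1.add q1, ?_⟩
  rw [integral_add p1 q1, ← p3, ← q3, ← integral_add p2 q2]
  apply integral_nonpos
  intro ω
  simp only [Pi.zero_apply]
  rw [GqC_mod, GqC_mod, GqC_zero]
  set Yh : Fin n → ℂ := fun j => FT (fun t => Yw t j) ω with hYh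
  set xh : Fin m → ℂ := fun j => FT (fun t => xw t j) ω with hxh
  have hs : ∀ i, FT (fun t => sw t i) ω = (γmat (pf ν ω)).mulVec Yh i :=
    fun i => FT_seg hτ hν hε Cop γmat hγ y hy hC ω i
  have ha : ∀ i, FT (fun t => aw t i) ω = (αmat (pf ν ω)).mulVec Yh i :=
    fun i => FT_seg hτ hν hε Atil αmat hα y hy hC ω i
  have hder : ∀ i, pf ν ω * Yh i = (αmat (pf ν ω)).mulVec Yh i +
      (Btil.map (fun x : ℝ => (x : ℂ))).mulVec xh i := by
    intro i
    have hb : ∀ j, Integrable fun t => Btil i j * xw t j := fun j =>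
      ((dx j).integrable hε).const_mul _
    have hdd : Dc ε fun t => Real.exp (ν * t) *
        (Atil (seg τ y hy t) + Btil.mulVec (η t)) i := by
      choose hm Cx hCx using dx
      obtain ⟨ham, Ca, hCa⟩ := da i
      have e : (fun t => Real.exp (ν * t) * (Atil (seg τ y hy t) + Btil.mulVec (η t)) i) =
          fun t => aw t i + ∑ j, Btil i j * xw t j := by
        ext1 t
        simp only [aw, xw, Pi.add_apply, Pi.smul_apply, smul_eq_mul, Matrix.mulVec, dotProduct,
          mul_add, Finset.mul_sum]
        congr 1
        exact Finset.sum_congr rfl fun j _ => by ring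
      rw [e]
      refine ⟨ham.add (Finset.aestronglyMeasurable_fun_sum _ fun j _ => (hm j).const_mul _),
        Ca + ∑ j, |Btil i j| * Cx j, fun t => ?_⟩
      rw [add_mul, Finset.sum_mul]
      refine (abs_add_le _ _).trans (add_le_add (hCa t) ?_)
      refine (Finset.abs_sum_le_sum_abs _ _).trans (Finset.sum_le_sum fun j _ => ?_)
      rw [abs_mul, mul_assoc]
      exact mul_le_mul_of_nonneg_left (hCx j t) (abs_nonneg _)
    have h1 := FT_deriv hε ω (fun t => y t i)
      (fun t => (Atil (seg τ y hy t) + Btil.mulVec (η t)) i) S hS (by fun_prop)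
      (fun t ht => (hasDerivAt_pi.1 (hd t ht)) i) (dY i) hdd
    have h2 : FT (fun t => Real.exp (ν * t) *
        (Atil (seg τ y hy t) + Btil.mulVec (η t)) i) ω =
        FT (fun t => aw t i) ω + ∑ j, (Btil i j : ℂ) * FT (fun t => xw t j) ω := by
      have ia := int_weight hε ω (fun t => Atil (seg τ y hy t) i) (da i)
      have ix := fun j => int_weight hε ω (fun t => η t j) (dx j)
      have ea : FT (fun t => aw t i) ω = _ := FT_weight ν ω (fun t => Atil (seg τ y hy t) i)
      have ex : ∀ j, FT (fun t => xw t j) ω = _ := fun j => FT_weight ν ω (fun t => η t j)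
      rw [FT_weight, ea]
      simp_rw [ex, ← integral_const_mul]
      rw [← integral_finsetSum _ (fun j _ => (ix j).const_mul _),
        ← integral_add ia (integrable_finsetSum _ fun j _ => (ix j).const_mul _)]
      congr 1
      ext1 t
      simp only [Pi.add_apply, Matrix.mulVec, dotProduct]
      push_cast
      rw [mul_add, Finset.mul_sum]
      congr 1
      exact Finset.sum_congr rfl fun j _ => by ring
    have h3 : pf ν ω * Yh i = _ := h1
    rw [h3, h2, ha]
    simp [Matrix.mulVec, dotProduct, hxh]
  have key := hU (2 * Real.pi * ω) xh (-Yh) (by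
    change (αmat (pf ν ω) - (pf ν ω) • (1 : Matrix (Fin n) (Fin n) ℂ)).mulVec (-Yh) = _
    ext i
    rw [Matrix.mulVec_neg, Matrix.sub_mulVec, Matrix.smul_mulVec, Matrix.one_mulVec]
    simp only [Pi.neg_apply, Pi.sub_apply, Pi.smul_apply, smul_eq_mul]
    rw [hder i]; ring)
  change GqC G1 G2 G3 (fun i => -((γmat (pf ν ω)).mulVec (-Yh) i)) xh +
        δ' * (L * ∑ i, ‖(γmat (pf ν ω)).mulVec (-Yh) i‖ ^ 2 - ∑ i, ‖xh i‖ ^ 2) +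
        δ2 * (∑ i, ‖xh i‖ ^ 2 + ∑ i, ‖(-Yh) i‖ ^ 2 +
          ∑ i, ‖(γmat (pf ν ω)).mulVec (-Yh) i‖ ^ 2 +
          ∑ i, ‖(αmat (pf ν ω)).mulVec (-Yh) i‖ ^ 2) ≤ 0 at key
  simp only [Matrix.mulVec_neg, Pi.neg_apply, neg_neg, norm_neg] at key
  simp_rw [hs, ha]
  linarith

theorem bil_bound {k l : ℕ} (M : Matrix (Fin k) (Fin l) ℝ) :
    ∃ c, 0 ≤ c ∧ ∀ u v, |u ⬝ᵥ M.mulVec v| ≤ c * (‖u‖ * ‖v‖) := by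
  set N := ‖LinearMap.toContinuousLinearMap (Matrix.mulVecLin M)‖ with hN
  refine ⟨k * N, by positivity, fun u v => ?_⟩
  have h1 : ‖M.mulVec v‖ ≤ N * ‖v‖ :=
    (LinearMap.toContinuousLinearMap (Matrix.mulVecLin M)).le_opNorm v
  calc |u ⬝ᵥ M.mulVec v| ≤ ∑ i, |u i * M.mulVec v i| := Finset.abs_sum_le_sum_abs _ _
    _ ≤ ∑ _i : Fin k, ‖u‖ * (N * ‖v‖) := by
        refine Finset.sum_le_sum fun i _ => ?_
        rw [abs_mul]
        exact mul_le_mul (norm_le_pi_norm u i) ((norm_le_pi_norm (M.mulVec v) i).trans h1)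
          (abs_nonneg _) (norm_nonneg _)
    _ = _ := by simp; ring

theorem amgm (c δ x y : ℝ) (hδ : 0 < δ) :
    2 * c * (x * y) ≤ δ * x ^ 2 + (c ^ 2 / δ) * y ^ 2 := by
  have h : 0 ≤ δ⁻¹ * (δ * x - c * y) ^ 2 := by positivity
  have e : δ⁻¹ * (δ * x - c * y) ^ 2 = δ * x ^ 2 + (c ^ 2 / δ) * y ^ 2 - 2 * c * (x * y) := by
    field_simp; ring
  linarith

theorem Gq_perturb {r m : ℕ} (G1 : Matrix (Fin r) (Fin r) ℝ) (G2 : Matrix (Fin r) (Fin m) ℝ)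
    (G3 : Matrix (Fin m) (Fin m) ℝ) (δ : ℝ) (hδ : 0 < δ) :
    ∃ K, 0 ≤ K ∧ ∀ (d b : Fin r → ℝ) (x : Fin m → ℝ),
      Gq G1 G2 G3 (d + b) x ≤ Gq G1 G2 G3 d x + δ * (‖d‖ ^ 2 + ‖x‖ ^ 2) + K * ‖b‖ ^ 2 := by
  obtain ⟨c1, hc1, h1⟩ := bil_bound G1
  obtain ⟨c2, hc2, h2⟩ := bil_bound G2
  refine ⟨c1 + c1 ^ 2 / δ + c2 ^ 2 / δ, by positivity, fun d b x => ?_⟩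
  have e : Gq G1 G2 G3 (d + b) x = Gq G1 G2 G3 d x + d ⬝ᵥ G1.mulVec b + b ⬝ᵥ G1.mulVec d +
      b ⬝ᵥ G1.mulVec b + 2 * (b ⬝ᵥ G2.mulVec x) := by
    simp only [Gq, Matrix.mulVec_add, dotProduct_add, add_dotProduct]; ring
  have a1 := (le_abs_self _).trans (h1 d b)
  have a2 := (le_abs_self _).trans (h1 b d)
  have a3 := (le_abs_self _).trans (h1 b b)
  have a4 := (le_abs_self _).trans (h2 b x)
  have b1 := amgm c1 δ ‖d‖ ‖b‖ hδ
  have b2 := amgm c2 δ ‖x‖ ‖b‖ hδ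
  rw [e]
  nlinarith

theorem real_norm_sq_le {k : ℕ} (v : Fin k → ℝ) : ‖v‖ ^ 2 ≤ ∑ i, v i ^ 2 := by
  have := norm_sq_le_sum v
  simpa using this

theorem real_sum_le {k : ℕ} (v : Fin k → ℝ) : ∑ i, v i ^ 2 ≤ k * ‖v‖ ^ 2 := by
  have := sq_sum_le v _ le_rfl
  simpa using this

set_option maxHeartbeats 1600000 in
theorem pointwise_bound {τ : ℝ} {m r : ℕ}
    (Atil : EE τ n →L[ℝ] (Fin n → ℝ)) (Cop : EE τ n →L[ℝ] (Fin r → ℝ))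
    (Btil : Matrix (Fin n) (Fin m) ℝ)
    (G1 : Matrix (Fin r) (Fin r) ℝ) (G2 : Matrix (Fin r) (Fin m) ℝ)
    (G3 : Matrix (Fin m) (Fin m) ℝ) (δ' L δ2 : ℝ) (hδ' : 0 < δ') (hδ2 : 0 < δ2) :
    ∃ c > (0:ℝ), ∃ K, 0 ≤ K ∧ ∀ (vx vz : EE τ n) (ξ : Fin m → ℝ) (x z : Fin n → ℝ),
      ‖z‖ ≤ ‖vz‖ → 0 ≤ Gq G1 G2 G3 (Cop vx) ξ →
      ∑ i, ξ i ^ 2 ≤ L * ∑ i, Cop vx i ^ 2 →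
      c * (‖x‖ ^ 2 + ‖Atil vx + Btil.mulVec ξ‖ ^ 2) ≤
        Pq G1 G2 G3 δ' L δ2 (Cop (vx - vz)) ξ (x - z) (Atil (vx - vz)) + K * ‖vz‖ ^ 2 := by
  obtain ⟨K0, hK0, hp⟩ := Gq_perturb (G1 + (δ' * L) • (1 : Matrix (Fin r) (Fin r) ℝ)) G2
    (G3 + (-δ') • (1 : Matrix (Fin m) (Fin m) ℝ)) (δ2 / 2) (by positivity)
  set b := ‖LinearMap.toContinuousLinearMap (Matrix.mulVecLin Btil)‖ with hb
  have hbb : ∀ ξ, ‖Btil.mulVec ξ‖ ≤ b * ‖ξ‖ :=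
    (LinearMap.toContinuousLinearMap (Matrix.mulVecLin Btil)).le_opNorm
  have hb0 : 0 ≤ b := norm_nonneg _
  set c := δ2 / (6 * (1 + b ^ 2)) with hc
  have hc0 : 0 < c := by positivity
  have hc1 : 6 * c * (1 + b ^ 2) = δ2 := by rw [hc]; field_simp
  refine ⟨c, hc0, K0 * ‖Cop‖ ^ 2 + c * (2 + 3 * ‖Atil‖ ^ 2), by positivity,
    fun vx vz ξ x z hz hG hL => ?_⟩
  set d := Cop (vx - vz) with hd
  set a := Atil (vx - vz) with ha
  have h1 := hp d (Cop vz) ξ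
  have e1 : d + Cop vz = Cop vx := by rw [hd, map_sub]; abel
  rw [e1, Gq_mod, Gq_mod] at h1
  have h2 : ‖Cop vz‖ ^ 2 ≤ ‖Cop‖ ^ 2 * ‖vz‖ ^ 2 := by
    rw [← mul_pow]; gcongr; exact Cop.le_opNorm _
  have h3 : ‖Atil vz‖ ^ 2 ≤ ‖Atil‖ ^ 2 * ‖vz‖ ^ 2 := by
    rw [← mul_pow]; gcongr; exact Atil.le_opNorm _
  have h4 : ‖x‖ ^ 2 ≤ 2 * ‖x - z‖ ^ 2 + 2 * ‖vz‖ ^ 2 := by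
    have : ‖x‖ ≤ ‖x - z‖ + ‖vz‖ := by
      have := norm_add_le (x - z) z
      rw [sub_add_cancel] at this; linarith
    have : ‖x‖ ^ 2 ≤ (‖x - z‖ + ‖vz‖) ^ 2 := by gcongr
    nlinarith [sq_nonneg (‖x - z‖ - ‖vz‖)]
  have h5 : ‖Atil vx + Btil.mulVec ξ‖ ^ 2 ≤
      3 * ‖a‖ ^ 2 + 3 * ‖Atil vz‖ ^ 2 + 3 * (b ^ 2 * ‖ξ‖ ^ 2) := by
    have e2 : Atil vx = a + Atil vz := by rw [ha, map_sub]; abel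
    have : ‖Atil vx + Btil.mulVec ξ‖ ≤ ‖a‖ + ‖Atil vz‖ + b * ‖ξ‖ := by
      rw [e2]
      exact (norm_add_le _ _).trans (add_le_add (norm_add_le _ _) (hbb ξ))
    have : ‖Atil vx + Btil.mulVec ξ‖ ^ 2 ≤ (‖a‖ + ‖Atil vz‖ + b * ‖ξ‖) ^ 2 := by gcongr
    nlinarith [sq_nonneg (‖a‖ - ‖Atil vz‖), sq_nonneg (‖a‖ - b * ‖ξ‖),
      sq_nonneg (‖Atil vz‖ - b * ‖ξ‖)]
  have n1 := real_norm_sq_le d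
  have n2 := real_norm_sq_le ξ
  have n3 := real_norm_sq_le (x - z)
  have n4 := real_norm_sq_le a
  have h6 : 0 ≤ δ' * (L * ∑ i, Cop vx i ^ 2 - ∑ i, ξ i ^ 2) := by
    apply mul_nonneg hδ'.le; linarith
  have h7 : c * (‖x‖ ^ 2 + ‖Atil vx + Btil.mulVec ξ‖ ^ 2) ≤
      c * (2 * ‖x - z‖ ^ 2 + 3 * ‖a‖ ^ 2 + 3 * (b ^ 2 * ‖ξ‖ ^ 2)) +
      c * (2 + 3 * ‖Atil‖ ^ 2) * ‖vz‖ ^ 2 := by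
    have : ‖x‖ ^ 2 + ‖Atil vx + Btil.mulVec ξ‖ ^ 2 ≤
      (2 * ‖x - z‖ ^ 2 + 3 * ‖a‖ ^ 2 + 3 * (b ^ 2 * ‖ξ‖ ^ 2)) +
        (2 + 3 * ‖Atil‖ ^ 2) * ‖vz‖ ^ 2 := by linarith
    have := mul_le_mul_of_nonneg_left this hc0.le
    linarith
  have h8 : c * (2 * ‖x - z‖ ^ 2 + 3 * ‖a‖ ^ 2 + 3 * (b ^ 2 * ‖ξ‖ ^ 2)) ≤
      δ2 / 2 * (‖x - z‖ ^ 2 + ‖a‖ ^ 2 + ‖ξ‖ ^ 2) := by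
    rw [← hc1]
    have : 0 ≤ c * b ^ 2 := by positivity
    nlinarith [mul_nonneg hc0.le (sq_nonneg ‖x - z‖), mul_nonneg hc0.le (sq_nonneg ‖a‖),
      mul_nonneg hc0.le (sq_nonneg ‖ξ‖), mul_nonneg this (sq_nonneg ‖x - z‖),
      mul_nonneg this (sq_nonneg ‖a‖)]
  have h9 : K0 * ‖Cop vz‖ ^ 2 ≤ K0 * ‖Cop‖ ^ 2 * ‖vz‖ ^ 2 := by
    rw [mul_assoc]; gcongr
  have h10 : δ2 / 2 * (‖x - z‖ ^ 2 + ‖a‖ ^ 2 + ‖ξ‖ ^ 2) + δ2 / 2 * (‖d‖ ^ 2 + ‖ξ‖ ^ 2) ≤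
      δ2 * (∑ i, ξ i ^ 2 + ∑ i, (x - z) i ^ 2 + ∑ i, d i ^ 2 + ∑ i, a i ^ 2) := by
    have : (‖x - z‖ ^ 2 + ‖a‖ ^ 2 + ‖ξ‖ ^ 2) / 2 + (‖d‖ ^ 2 + ‖ξ‖ ^ 2) / 2 ≤
      (∑ i, ξ i ^ 2 + ∑ i, (x - z) i ^ 2 + ∑ i, d i ^ 2 + ∑ i, a i ^ 2) := by
      nlinarith [sq_nonneg ‖x - z‖, sq_nonneg ‖a‖, sq_nonneg ‖d‖]
    have := mul_le_mul_of_nonneg_left this hδ2.le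
    linarith
  rw [Pq]
  linarith

set_option maxHeartbeats 1600000 in
theorem energy {τ ν ε M c K : ℝ} {m r : ℕ} (hτ : 0 < τ) (hν : 0 ≤ ν) (hε : 0 < ε) (hM : 0 < M)
    (Atil : EE τ n →L[ℝ] (Fin n → ℝ)) (Cop : EE τ n →L[ℝ] (Fin r → ℝ))
    (Btil : Matrix (Fin n) (Fin m) ℝ)
    (G1 : Matrix (Fin r) (Fin r) ℝ) (G2 : Matrix (Fin r) (Fin m) ℝ)
    (G3 : Matrix (Fin m) (Fin m) ℝ)
    (δ' L δ2 : ℝ) (hδ' : 0 < δ') (hL : 0 ≤ L) (hδ2 : 0 < δ2)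
    (hPl : ∀ (C : ℝ) (y : ℝ → Fin n → ℝ) (hy : Continuous y),
      (∀ t, Real.exp (ν * t) * ‖y t‖ ≤ C * Real.exp (-ε * |t|)) →
      ∀ (η : ℝ → Fin m → ℝ), (∀ j, Dc ε fun t => Real.exp (ν * t) * η t j) →
      ∀ (S : Set ℝ), S.Countable →
      (∀ t, t ∉ S → HasDerivAt y (Atil (seg τ y hy t) + Btil.mulVec (η t)) t) →
      Integrable (fun t => Real.exp (ν * t) ^ 2 *
        Pq G1 G2 G3 δ' L δ2 (Cop (seg τ y hy t)) (η t) (y t) (Atil (seg τ y hy t))) ∧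
      ∫ t, Real.exp (ν * t) ^ 2 *
        Pq G1 G2 G3 δ' L δ2 (Cop (seg τ y hy t)) (η t) (y t) (Atil (seg τ y hy t)) ≤ 0)
    (hF0 : ∀ v : EE τ n, 0 ≤ Gq G1 G2 G3 (Cop v) 0)
    (hlin : ∀ φ : EE τ n, ∃ (x : ℝ → (Fin n → ℝ)) (hx : Continuous x),
      seg τ x hx 0 = φ ∧
      (∀ s : ℝ, 0 ≤ s → HasDerivWithinAt x (Atil (seg τ x hx s)) (Set.Ici 0) s) ∧
      ∀ t, 0 ≤ t → ‖seg τ x hx t‖ ≤ M * Real.exp (-(ν + ε) * t) * ‖φ‖)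
    (hc : 0 < c) (hK : 0 ≤ K)
    (hpt : ∀ (vx vz : EE τ n) (ξ : Fin m → ℝ) (x z : Fin n → ℝ),
      ‖z‖ ≤ ‖vz‖ → 0 ≤ Gq G1 G2 G3 (Cop vx) ξ →
      ∑ i, ξ i ^ 2 ≤ L * ∑ i, Cop vx i ^ 2 →
      c * (‖x‖ ^ 2 + ‖Atil vx + Btil.mulVec ξ‖ ^ 2) ≤
        Pq G1 G2 G3 δ' L δ2 (Cop (vx - vz)) ξ (x - z) (Atil (vx - vz)) + K * ‖vz‖ ^ 2) :
    ∀ (x : ℝ → Fin n → ℝ) (hx : Continuous x) (ξ : ℝ → Fin m → ℝ), Continuous ξ →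
      (∀ s : ℝ, 0 ≤ s →
        HasDerivWithinAt x (Atil (seg τ x hx s) + Btil.mulVec (ξ s)) (Set.Ici 0) s) →
      (∀ s : ℝ, 0 ≤ s → 0 ≤ Gq G1 G2 G3 (Cop (seg τ x hx s)) (ξ s)) →
      (∀ s : ℝ, 0 ≤ s → ∑ i, ξ s i ^ 2 ≤ L * ∑ i, Cop (seg τ x hx s) i ^ 2) →
      ∀ T, 0 < T → ∫ t in (0:ℝ)..T, Real.exp (ν * t) ^ 2 *
        (‖x t‖ ^ 2 + ‖Atil (seg τ x hx t) + Btil.mulVec (ξ t)‖ ^ 2) ≤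
          (K * M ^ 2 / (2 * ε * c)) * ‖seg τ x hx 0‖ ^ 2 := by
  intro x hx ξ hξ hxd hxG hxL T hT
  obtain ⟨z, hz, hz0, hzd, hzb⟩ := hlin (seg τ x hx 0)
  have hxz : ∀ s, -τ ≤ s → s ≤ 0 → z s = x s := by
    intro s h1 h2
    have := congrArg (fun φ : EE τ n => φ ⟨s, h1, h2⟩) hz0
    simpa [seg_apply] using this
  let w : ℝ → Fin n → ℝ := fun t => if t ≤ 0 then 0 else x t - z t
  have hw : Continuous w := by
    refine Continuous.if_le continuous_const (hx.sub hz) continuous_id continuous_const ?_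
    intro t ht
    have ht : t = 0 := ht
    rw [ht, hxz 0 (by linarith) le_rfl, sub_self]
  have hw1 : ∀ s, -τ ≤ s → w s = x s - z s := by
    intro s hs
    simp only [w]
    split_ifs with h
    · rw [hxz s hs h, sub_self]
    · rfl
  have hw0 : ∀ s, s ≤ 0 → w s = 0 := fun s hs => by simp only [w]; rw [if_pos hs]
  obtain ⟨h, hh, hh0, hhd, hhb⟩ := hlin (seg τ w hw T)
  have hhw : ∀ s, T - τ ≤ s → s ≤ T → h (s - T) = w s := by
    intro s h1 h2
    have := congrArg (fun φ : EE τ n => φ ⟨s - T, by linarith, by linarith⟩) hh0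
    simpa [seg_apply] using this
  let y : ℝ → Fin n → ℝ := fun t => if t ≤ T then w t else h (t - T)
  have hy : Continuous y := by
    refine Continuous.if_le hw (hh.comp (continuous_id.sub continuous_const)) continuous_id
      continuous_const ?_
    intro t ht
    have ht : t = T := ht
    show w t = h (t - T)
    rw [hhw t (by linarith) (by linarith)]
  have hyw : ∀ s, s ≤ T → y s = w s := fun s hs => by simp only [y]; rw [if_pos hs]
  have hyh : ∀ s, T - τ ≤ s → y s = h (s - T) := by
    intro s hs
    simp only [y]
    split_ifs with h1
    · rw [hhw s hs h1]
    · rfl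
  have sy0 : ∀ t, t ≤ 0 → seg τ y hy t = 0 := by
    intro t ht
    ext1 θ
    have := θ.2.2
    rw [seg_apply, hyw _ (by linarith), hw0 _ (by linarith)]; rfl
  have sy1 : ∀ t, 0 ≤ t → t ≤ T → seg τ y hy t = seg τ x hx t - seg τ z hz t := by
    intro t h1 h2
    ext1 θ
    have := θ.2.2
    have := θ.2.1
    rw [seg_apply, hyw _ (by linarith), hw1 _ (by linarith)]; rfl
  have sy2 : ∀ t, T ≤ t → seg τ y hy t = seg τ h hh (t - T) := by
    intro t h1
    ext1 θ
    have := θ.2.1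
    rw [seg_apply, hyh _ (by linarith), seg_apply]
    congr 1; ring
  let η : ℝ → Fin m → ℝ := fun t => if 0 < t ∧ t ≤ T then ξ t else 0
  have hη1 : ∀ t, 0 < t → t ≤ T → η t = ξ t := fun t h1 h2 => by
    simp only [η]; rw [if_pos ⟨h1, h2⟩]
  have hη2 : ∀ t, ¬ (0 < t ∧ t ≤ T) → η t = 0 := fun t h1 => by
    simp only [η]; rw [if_neg h1]
  -- decay of y
  obtain ⟨C1, hC1⟩ := (isCompact_Icc (a := (0:ℝ)) (b := T)).exists_bound_of_continuousOn
    hy.continuousOn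
  have hC10 : 0 ≤ C1 := (norm_nonneg _).trans (hC1 0 ⟨le_rfl, hT.le⟩)
  set φn := ‖seg τ w hw T‖ with hφn
  have hφ0 : 0 ≤ φn := norm_nonneg _
  have hdec : ∀ t, Real.exp (ν * t) * ‖y t‖ ≤
      (Real.exp (ν * T) * Real.exp (ε * T) * (C1 + M * φn)) * Real.exp (-ε * |t|) := by
    intro t
    rcases le_total t 0 with h0 | h0
    · rw [hyw t (by linarith), hw0 t h0]; simp; positivity
    rw [abs_of_nonneg h0]
    rcases le_total t T with h1 | h1
    · have e1 : Real.exp (ν * t) ≤ Real.exp (ν * T) := by gcongr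
      have e2 : 1 ≤ Real.exp (ε * T) * Real.exp (-ε * t) := by
        rw [← Real.exp_add]; apply Real.one_le_exp; nlinarith
      calc Real.exp (ν * t) * ‖y t‖ ≤ Real.exp (ν * T) * (C1 + M * φn) := by
            gcongr; exact (hC1 t ⟨h0, h1⟩).trans (by nlinarith)
        _ = Real.exp (ν * T) * (C1 + M * φn) * 1 := by ring
        _ ≤ Real.exp (ν * T) * (C1 + M * φn) * (Real.exp (ε * T) * Real.exp (-ε * t)) := by gcongr
        _ = _ := by ring
    · have e1 : ‖y t‖ ≤ M * Real.exp (-(ν + ε) * (t - T)) * φn := by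
        rw [hyh t (by linarith)]
        exact (le_norm_seg τ h hh (t - T) (t - T) (by linarith) le_rfl).trans
          (hhb (t - T) (by linarith))
      have e2 : Real.exp (ν * t) * Real.exp (-(ν + ε) * (t - T)) =
          Real.exp (ν * T) * Real.exp (ε * T) * Real.exp (-ε * t) := by
        rw [← Real.exp_add, ← Real.exp_add, ← Real.exp_add]; congr 1; ring
      calc Real.exp (ν * t) * ‖y t‖ ≤
            Real.exp (ν * t) * (M * Real.exp (-(ν + ε) * (t - T)) * φn) := by gcongr
        _ = (Real.exp (ν * t) * Real.exp (-(ν + ε) * (t - T))) * (M * φn) := by ring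
        _ ≤ (Real.exp (ν * T) * Real.exp (ε * T) * Real.exp (-ε * t)) * (C1 + M * φn) := by
            rw [e2]; gcongr; linarith
        _ = _ := by ring
  have hηD : ∀ j, Dc ε fun t => Real.exp (ν * t) * η t j := by
    intro j
    obtain ⟨C2, hC2⟩ := (isCompact_Icc (a := (0:ℝ)) (b := T)).exists_bound_of_continuousOn
      (f := fun t => Real.exp (ν * t) * ξ t j)
      (by fun_prop : Continuous fun t => Real.exp (ν * t) * ξ t j).continuousOn
    have hC20 : 0 ≤ C2 := (norm_nonneg _).trans (hC2 0 ⟨le_rfl, hT.le⟩)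
    refine ⟨?_, C2 * Real.exp (ε * T), fun t => ?_⟩
    · have e : (fun t => Real.exp (ν * t) * η t j) =
          (Set.Ioc 0 T).indicator (fun t => Real.exp (ν * t) * ξ t j) := by
        ext1 t
        by_cases ht : 0 < t ∧ t ≤ T
        · rw [hη1 t ht.1 ht.2, Set.indicator_of_mem (show t ∈ Set.Ioc 0 T from ht)]
        · rw [hη2 t ht, Set.indicator_of_notMem (show t ∉ Set.Ioc 0 T from ht)]; simp
      rw [e]
      exact ((by fun_prop : Continuous fun t => Real.exp (ν * t) * ξ t j).aestronglyMeasurable).indicator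
        measurableSet_Ioc
    · by_cases ht : 0 < t ∧ t ≤ T
      · show |Real.exp (ν * t) * η t j| ≤ _
        rw [hη1 t ht.1 ht.2]
        have e2 : 1 ≤ Real.exp (ε * T) * Real.exp (-ε * |t|) := by
          rw [← Real.exp_add, abs_of_pos ht.1]; apply Real.one_le_exp; nlinarith [ht.2]
        have e3 := hC2 t ⟨ht.1.le, ht.2⟩
        rw [Real.norm_eq_abs] at e3
        rw [mul_assoc]
        nlinarith
      · show |Real.exp (ν * t) * η t j| ≤ _
        rw [hη2 t ht]; simp; positivity
  have hder : ∀ t, t ∉ ({0, T} : Set ℝ) →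
      HasDerivAt y (Atil (seg τ y hy t) + Btil.mulVec (η t)) t := by
    intro t ht
    have ht0 : t ≠ 0 := fun h => ht (by simp [h])
    have htT : t ≠ T := fun h => ht (by simp [h])
    rcases lt_or_gt_of_ne ht0 with h0 | h0
    · rw [sy0 t h0.le, hη2 t (fun h => by linarith [h.1]), map_zero, Matrix.mulVec_zero, add_zero]
      refine (hasDerivAt_const t (0 : Fin n → ℝ)).congr_of_eventuallyEq ?_
      filter_upwards [Iio_mem_nhds h0] with s hs
      rw [hyw s (by linarith [Set.mem_Iio.1 hs]), hw0 s (Set.mem_Iio.1 hs).le]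
    rcases lt_or_gt_of_ne htT with h1 | h1
    · rw [sy1 t h0.le h1.le, hη1 t h0 h1.le, map_sub]
      have d1 := (hxd t h0.le).hasDerivAt (Ici_mem_nhds h0)
      have d2 := (hzd t h0.le).hasDerivAt (Ici_mem_nhds h0)
      have d3 := d1.sub d2
      refine HasDerivAt.congr_of_eventuallyEq (d3.congr_deriv (by abel)) ?_
      filter_upwards [Iio_mem_nhds h1, Ioi_mem_nhds h0] with s hs hs'
      rw [hyw s (Set.mem_Iio.1 hs).le, hw1 s (by linarith [Set.mem_Ioi.1 hs'])]
      rfl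
    · rw [sy2 t h1.le, hη2 t (fun h => by linarith [h.2]), Matrix.mulVec_zero, add_zero]
      have d1 := (hhd (t - T) (by linarith)).hasDerivAt (Ici_mem_nhds (by linarith))
      have d2 := d1.comp_sub_const t T
      refine d2.congr_of_eventuallyEq ?_
      filter_upwards [Ioi_mem_nhds h1] with s hs
      rw [hyh s (by linarith [Set.mem_Ioi.1 hs])]
  obtain ⟨hEi, hE0⟩ := hPl _ y hy hdec η hηD {0, T} (Set.toFinite _).countable hder
  set E : ℝ → ℝ := fun t => Real.exp (ν * t) ^ 2 *
        Pq G1 G2 G3 δ' L δ2 (Cop (seg τ y hy t)) (η t) (y t) (Atil (seg τ y hy t)) with hE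
  have hEc : ∫ t in Set.Ioc 0 T, E t ≤ 0 := by
    have h1 := integral_add_compl (measurableSet_Ioc (a := (0:ℝ)) (b := T)) hEi
    have h2 : 0 ≤ ∫ t in (Set.Ioc 0 T)ᶜ, E t := by
      refine setIntegral_nonneg measurableSet_Ioc.compl fun t ht => ?_
      have hη0 := hη2 t ht
      simp only [hE]
      rw [hη0, Pq]
      have a1 := hF0 (seg τ y hy t)
      have a2 : 0 ≤ δ' * (L * ∑ i, Cop (seg τ y hy t) i ^ 2 -
        ∑ i : Fin m, (0 : Fin m → ℝ) i ^ 2) := by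
        simp; positivity
      have a3 : 0 ≤ δ2 * (∑ i : Fin m, (0 : Fin m → ℝ) i ^ 2 + ∑ i, y t i ^ 2 +
        ∑ i, Cop (seg τ y hy t) i ^ 2 + ∑ i, Atil (seg τ y hy t) i ^ 2) := by positivity
      positivity
    linarith
  -- the pointwise comparison
  set φ0 := ‖seg τ x hx 0‖ with hφ0'
  have hptw : ∀ t ∈ Set.Ioc 0 T, c * (Real.exp (ν * t) ^ 2 *
        (‖x t‖ ^ 2 + ‖Atil (seg τ x hx t) + Btil.mulVec (ξ t)‖ ^ 2)) ≤
        E t + (K * M ^ 2 * φ0 ^ 2) * Real.exp ((-(2 * ε)) * t) := by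
    intro t ht
    have a1 := hpt (seg τ x hx t) (seg τ z hz t) (ξ t) (x t) (z t)
      (le_norm_seg τ z hz t t (by linarith) le_rfl) (hxG t ht.1.le) (hxL t ht.1.le)
    have a2 : E t = Real.exp (ν * t) ^ 2 * Pq G1 G2 G3 δ' L δ2
        (Cop (seg τ x hx t - seg τ z hz t)) (ξ t) (x t - z t)
        (Atil (seg τ x hx t - seg τ z hz t)) := by
      simp only [hE]
      rw [sy1 t ht.1.le ht.2, hη1 t ht.1 ht.2, hyw t ht.2, hw1 t (by linarith [ht.1])]
    have a3 := hzb t ht.1.le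
    have a4 : Real.exp (ν * t) ^ 2 * ‖seg τ z hz t‖ ^ 2 ≤
        M ^ 2 * φ0 ^ 2 * Real.exp ((-(2 * ε)) * t) := by
      have : Real.exp (ν * t) * ‖seg τ z hz t‖ ≤ M * φ0 * Real.exp (-ε * t) := by
        calc _ ≤ Real.exp (ν * t) * (M * Real.exp (-(ν + ε) * t) * φ0) := by gcongr
          _ = M * φ0 * (Real.exp (ν * t) * Real.exp (-(ν + ε) * t)) := by ring
          _ = _ := by rw [← Real.exp_add]; congr 2; ring
      calc Real.exp (ν * t) ^ 2 * ‖seg τ z hz t‖ ^ 2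
          = (Real.exp (ν * t) * ‖seg τ z hz t‖) ^ 2 := by ring
        _ ≤ (M * φ0 * Real.exp (-ε * t)) ^ 2 := by gcongr
        _ = M ^ 2 * φ0 ^ 2 * (Real.exp (-ε * t) * Real.exp (-ε * t)) := by ring
        _ = _ := by rw [← Real.exp_add]; congr 2; ring
    have a5 := mul_le_mul_of_nonneg_left a1 (sq_nonneg (Real.exp (ν * t)))
    have a6 := mul_le_mul_of_nonneg_left a4 hK
    rw [a2]
    linarith
  have hxA : Continuous fun t => Atil (seg τ x hx t) + Btil.mulVec (ξ t) :=
    (Atil.continuous.comp (seg_continuous τ x hx)).add (continuous_const.matrix_mulVec hξ)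
  have hF1 : Continuous fun t => Real.exp (ν * t) ^ 2 *
        (‖x t‖ ^ 2 + ‖Atil (seg τ x hx t) + Btil.mulVec (ξ t)‖ ^ 2) := by fun_prop
  have hX1 : Continuous fun t => (K * M ^ 2 * φ0 ^ 2) * Real.exp ((-(2 * ε)) * t) := by fun_prop
  have hX1i : IntegrableOn (fun t => (K * M ^ 2 * φ0 ^ 2) * Real.exp ((-(2 * ε)) * t))
      (Set.Ioc 0 T) := (hX1.integrableOn_Icc).mono_set Set.Ioc_subset_Icc_self
  have hI := setIntegral_mono_on
    (((hF1.integrableOn_Icc (a := 0) (b := T)).mono_set Set.Ioc_subset_Icc_self).const_mul c)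
    (hEi.integrableOn.add hX1i) measurableSet_Ioc hptw
  rw [integral_const_mul] at hI
  have hadd : ∫ t in Set.Ioc 0 T, (E + fun t => (K * M ^ 2 * φ0 ^ 2) *
      Real.exp ((-(2 * ε)) * t)) t =
      (∫ t in Set.Ioc 0 T, E t) + ∫ t in Set.Ioc 0 T,
        (K * M ^ 2 * φ0 ^ 2) * Real.exp ((-(2 * ε)) * t) :=
    integral_add hEi.integrableOn hX1i
  have hexp : ∫ t in Set.Ioc 0 T, (K * M ^ 2 * φ0 ^ 2) * Real.exp ((-(2 * ε)) * t) ≤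
      (K * M ^ 2 * φ0 ^ 2) * (1 / (2 * ε)) := by
    rw [integral_const_mul, ← intervalIntegral.integral_of_le hT.le,
      intervalIntegral.integral_comp_mul_left (fun s => Real.exp s) (by linarith), integral_exp]
    gcongr
    have := Real.exp_pos (-(2 * ε) * T)
    rw [smul_eq_mul, mul_zero, Real.exp_zero, inv_neg, one_div]
    have h2 : 0 < (2 * ε)⁻¹ := by positivity
    nlinarith
  rw [intervalIntegral.integral_of_le hT.le]
  have hfin := hI.trans (le_of_eq hadd)
  have : K * M ^ 2 / (2 * ε * c) * φ0 ^ 2 = ((K * M ^ 2 * φ0 ^ 2) * (1 / (2 * ε))) / c := by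
    field_simp
  rw [this, le_div_iff₀ hc]
  linarith

theorem win_ftc {ν : ℝ} (hν : 0 ≤ ν) (x v : ℝ → Fin n → ℝ) (hx : Continuous x) (hv : Continuous v)
    (hd : ∀ s : ℝ, 0 ≤ s → HasDerivWithinAt x (v s) (Set.Ici 0) s) (i : Fin n)
    (p q : ℝ) (a b : ℝ) (ha : 0 ≤ a) (hab : a ≤ b)
    (hq : |q| ≤ 1) (hpq : ∀ s ∈ Set.Icc a b, |p + q * s| ≤ 1) :
    (p + q * b) * (Real.exp (ν * b) * x b i) ^ 2 ≤
      (p + q * a) * (Real.exp (ν * a) * x a i) ^ 2 +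
      (2 * ν + 2) * ∫ t in a..b, Real.exp (ν * t) ^ 2 * (‖x t‖ ^ 2 + ‖v t‖ ^ 2) := by
  have hder : ∀ s ∈ Set.Ioo a b, HasDerivAt
      (fun t => (p + q * t) * (Real.exp (ν * t) * x t i) ^ 2)
      (q * (Real.exp (ν * s) * x s i) ^ 2 + (p + q * s) *
        (2 * (Real.exp (ν * s) * x s i) *
          (Real.exp (ν * s) * ν * x s i + Real.exp (ν * s) * v s i))) s := by
    intro s hs
    have d1 := hasDerivAt_pi.1 ((hd s (by linarith [hs.1])).hasDerivAt
      (Ici_mem_nhds (by linarith [hs.1]))) i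
    have d2 : HasDerivAt (fun t => Real.exp (ν * t)) (Real.exp (ν * s) * ν) s := by
      simpa using ((hasDerivAt_id s).const_mul ν).exp
    have d3 := (d2.mul d1).pow 2
    have d4 : HasDerivAt (fun t => p + q * t) q s := by
      simpa using ((hasDerivAt_id s).const_mul q).const_add p
    have d5 := d4.mul d3
    refine d5.congr_deriv ?_
    simp
  have hc : Continuous fun s => (q * (Real.exp (ν * s) * x s i) ^ 2 + (p + q * s) *
        (2 * (Real.exp (ν * s) * x s i) *
          (Real.exp (ν * s) * ν * x s i + Real.exp (ν * s) * v s i))) := by fun_prop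
  have h1 := intervalIntegral.integral_eq_sub_of_hasDerivAt_of_le hab
    (by fun_prop : Continuous fun t => (p + q * t) * (Real.exp (ν * t) * x t i) ^ 2).continuousOn
    hder (hc.intervalIntegrable _ _)
  have hc2 : Continuous fun t => (2 * ν + 2) *
      (Real.exp (ν * t) ^ 2 * (‖x t‖ ^ 2 + ‖v t‖ ^ 2)) := by fun_prop
  have h2 := intervalIntegral.integral_mono_on hab (hc.intervalIntegrable (μ := volume) a b)
    (hc2.intervalIntegrable a b) (fun s hs => by
      have e1 : |x s i| ≤ ‖x s‖ := norm_le_pi_norm (x s) i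
      have e2 : |v s i| ≤ ‖v s‖ := norm_le_pi_norm (v s) i
      have e3 := hpq s hs
      have f1 : x s i ^ 2 ≤ ‖x s‖ ^ 2 := sq_le_sq' (by linarith [neg_abs_le (x s i)])
        ((le_abs_self _).trans e1)
      have f2 : |x s i * v s i| ≤ (‖x s‖ ^ 2 + ‖v s‖ ^ 2) / 2 := by
        rw [abs_mul]
        have : |x s i| * |v s i| ≤ ‖x s‖ * ‖v s‖ := by gcongr
        nlinarith [sq_nonneg (‖x s‖ - ‖v s‖)]
      have f3 : q * x s i ^ 2 ≤ ‖x s‖ ^ 2 := by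
        have : q ≤ 1 := (le_abs_self q).trans hq
        nlinarith [sq_nonneg (x s i)]
      have f4 : (p + q * s) * (ν * x s i ^ 2 + x s i * v s i) ≤
          ν * ‖x s‖ ^ 2 + (‖x s‖ ^ 2 + ‖v s‖ ^ 2) / 2 := by
        have g1 : |ν * x s i ^ 2 + x s i * v s i| ≤
            ν * ‖x s‖ ^ 2 + (‖x s‖ ^ 2 + ‖v s‖ ^ 2) / 2 := by
          refine (abs_add_le _ _).trans (add_le_add ?_ f2)
          rw [abs_of_nonneg (by positivity)]; gcongr
        refine (le_abs_self _).trans ?_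
        rw [abs_mul]
        refine le_trans ?_ g1
        exact mul_le_of_le_one_left (abs_nonneg _) e3
      have f5 : q * x s i ^ 2 + 2 * ((p + q * s) * (ν * x s i ^ 2 + x s i * v s i)) ≤
          (2 * ν + 2) * (‖x s‖ ^ 2 + ‖v s‖ ^ 2) := by nlinarith [sq_nonneg ‖v s‖]
      have f6 := mul_le_mul_of_nonneg_left f5 (sq_nonneg (Real.exp (ν * s)))
      calc _ = Real.exp (ν * s) ^ 2 *
            (q * x s i ^ 2 + 2 * ((p + q * s) * (ν * x s i ^ 2 + x s i * v s i))) := by ring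
        _ ≤ _ := f6
        _ = _ := by ring)
  rw [h1, intervalIntegral.integral_const_mul] at h2
  linarith

theorem seg_weight {τ ν D : ℝ} (hν : 0 ≤ ν) (hD : 0 ≤ D)
    (x : ℝ → Fin n → ℝ) (hx : Continuous x) (t : ℝ)
    (h : ∀ s, t - τ ≤ s → s ≤ t → Real.exp (ν * s) * ‖x s‖ ≤ D) :
    Real.exp (ν * t) * ‖seg τ x hx t‖ ≤ Real.exp (ν * τ) * D := by
  have : ‖seg τ x hx t‖ ≤ Real.exp (-(ν * t)) * (Real.exp (ν * τ) * D) := by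
    refine norm_seg_le τ x hx t _ (by positivity) fun s h1 h2 => ?_
    have h3 := h s h1 h2
    have h4 : ‖x s‖ ≤ Real.exp (-(ν * s)) * D := by
      rw [Real.exp_neg, ← div_eq_inv_mul, le_div_iff₀ (Real.exp_pos _)]; linarith
    refine h4.trans ?_
    rw [← mul_assoc, ← Real.exp_add]
    gcongr
    nlinarith
  calc _ ≤ Real.exp (ν * t) * (Real.exp (-(ν * t)) * (Real.exp (ν * τ) * D)) := by gcongr
    _ = (Real.exp (ν * t) * Real.exp (-(ν * t))) * (Real.exp (ν * τ) * D) := by ring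
    _ = _ := by rw [← Real.exp_add]; simp

theorem weight_norm_le {ν D s : ℝ} (hD : 0 ≤ D) (x : ℝ → Fin n → ℝ)
    (h : ∀ i, (Real.exp (ν * s) * x s i) ^ 2 ≤ D ^ 2) : Real.exp (ν * s) * ‖x s‖ ≤ D := by
  have : ‖Real.exp (ν * s) • x s‖ ≤ D := by
    rw [pi_norm_le_iff_of_nonneg hD]
    intro i
    exact abs_le_of_sq_le_sq (h i) hD
  rwa [norm_smul, Real.norm_eq_abs, Real.abs_exp] at this

theorem base1 {τ ν K0 : ℝ} (hτ : 0 < τ) (hν : 0 ≤ ν) (hK0 : 0 ≤ K0)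
    (x v : ℝ → Fin n → ℝ) (hx : Continuous x) (hv : Continuous v)
    (hd : ∀ s : ℝ, 0 ≤ s → HasDerivWithinAt x (v s) (Set.Ici 0) s)
    (hE : ∀ T, 0 < T → ∫ t in (0:ℝ)..T, Real.exp (ν * t) ^ 2 * (‖x t‖ ^ 2 + ‖v t‖ ^ 2) ≤
      K0 * ‖seg τ x hx 0‖ ^ 2) (t : ℝ) (ht : 0 ≤ t) :
    Real.exp (ν * t) * ‖seg τ x hx t‖ ≤
      (Real.exp (ν * τ) * (1 + (2 * ν + 2) * K0)) * ‖seg τ x hx 0‖ := by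
  set φ := ‖seg τ x hx 0‖ with hφ
  have hφ0 : 0 ≤ φ := norm_nonneg _
  rw [mul_assoc]
  have hκ : 0 ≤ (2 * ν + 2) * K0 := by positivity
  refine seg_weight hν (by positivity) x hx t fun s h1 h2 => ?_
  have hle : φ ≤ (1 + (2 * ν + 2) * K0) * φ := by nlinarith
  rcases le_or_gt s 0 with h0 | h0
  · refine le_trans ?_ hle
    have a1 : ‖x s‖ ≤ φ := le_norm_seg τ x hx 0 s (by linarith) h0
    have a2 : Real.exp (ν * s) ≤ 1 := Real.exp_le_one_iff.2 (by nlinarith)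
    nlinarith [norm_nonneg (x s)]
  · refine weight_norm_le (by positivity) x fun i => ?_
    have a1 := win_ftc hν x v hx hv hd i 1 0 0 s le_rfl h0.le (by simp) (by simp)
    have a2 := hE s h0
    have a3 : x 0 i ^ 2 ≤ φ ^ 2 := by
      have := (norm_le_pi_norm (x 0) i).trans (le_norm_seg τ x hx 0 0 (by linarith) le_rfl)
      exact sq_le_sq' (by linarith [neg_abs_le (x 0 i), (Real.norm_eq_abs (x 0 i))])
        ((le_abs_self _).trans this)
    simp only [zero_mul, add_zero, one_mul, mul_zero, Real.exp_zero] at a1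
    have a4 := mul_le_mul_of_nonneg_left a2 (by positivity : 0 ≤ 2 * ν + 2)
    have a5 : (1 + (2 * ν + 2) * K0) * φ ^ 2 ≤ ((1 + (2 * ν + 2) * K0) * φ) ^ 2 := by
      rw [mul_pow]; gcongr; nlinarith
    linarith

theorem base2 {τ ν K0 : ℝ} (hτ : 0 < τ) (hν : 0 ≤ ν) (hK0 : 0 ≤ K0)
    (x v : ℝ → Fin n → ℝ) (hx : Continuous x) (hv : Continuous v)
    (hd : ∀ s : ℝ, 0 ≤ s → HasDerivWithinAt x (v s) (Set.Ici 0) s)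
    (hE : ∀ T, 0 < T → ∫ t in (0:ℝ)..T, Real.exp (ν * t) ^ 2 * (‖x t‖ ^ 2 + ‖v t‖ ^ 2) ≤
      K0 * ‖seg τ x hx 0‖ ^ 2) (N : ℕ) (hN : 0 < N) (δ : ℝ) (hδ : 0 < δ)
    (hNδ : (2 * ν + 2) * K0 ≤ δ ^ 2 * N) :
    ∃ t, 0 ≤ t ∧ t ≤ N * (τ + 1) ∧ Real.exp (ν * t) * ‖seg τ x hx t‖ ≤
      (Real.exp (ν * τ) * δ) * ‖seg τ x hx 0‖ := by
  set φ := ‖seg τ x hx 0‖ with hφ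
  have hφ0 : 0 ≤ φ := norm_nonneg _
  set I : ℝ → ℝ := fun t => Real.exp (ν * t) ^ 2 * (‖x t‖ ^ 2 + ‖v t‖ ^ 2) with hI
  have hIc : Continuous I := by fun_prop
  have hI0 : ∀ t, 0 ≤ I t := fun t => by positivity
  have hNp : (0:ℝ) < N := by exact_mod_cast hN
  obtain ⟨j, hj, hjI⟩ : ∃ j < N, (∫ t in ((j:ℕ) * (τ + 1) : ℝ)..((j + 1 : ℕ) * (τ + 1)), I t) * N ≤
      K0 * φ ^ 2 := by
    by_contra! hcon
    have s1 := intervalIntegral.sum_integral_adjacent_intervals (μ := volume) (f := I)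
      (a := fun k : ℕ => (k : ℝ) * (τ + 1)) (n := N) (fun k _ => hIc.intervalIntegrable _ _)
    have s2 := hE (N * (τ + 1)) (by positivity)
    simp only [Nat.cast_zero, zero_mul] at s1
    have s3 : ∑ k ∈ Finset.range N, K0 * φ ^ 2 / N <
        ∑ k ∈ Finset.range N, ∫ t in ((k:ℕ) * (τ + 1) : ℝ)..((k + 1 : ℕ) * (τ + 1)), I t := by
      refine Finset.sum_lt_sum_of_nonempty (by simpa using hN.ne') fun k hk => ?_
      rw [div_lt_iff₀ hNp]
      exact hcon k (Finset.mem_range.1 hk)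
    rw [s1, Finset.sum_const, Finset.card_range, nsmul_eq_mul, mul_div_cancel₀ _ hNp.ne'] at s3
    linarith
  have hj0 : (0:ℝ) ≤ j := Nat.cast_nonneg j
  push_cast at hjI
  refine ⟨(j + 1) * (τ + 1), by positivity, ?_, ?_⟩
  · have : ((j:ℝ) + 1) ≤ N := by exact_mod_cast hj
    gcongr
  rw [mul_assoc]
  refine seg_weight hν (by positivity) x hx _ fun s h1 h2 => ?_
  refine weight_norm_le (by positivity) x fun i => ?_
  have hs0 : j * (τ + 1) ≤ s - 1 := by linarith
  have hjj : 0 ≤ j * (τ + 1) := by positivity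
  have a1 := win_ftc hν x v hx hv hd i (-(s - 1)) 1 (s - 1) s (by linarith) (by linarith) (by simp)
    (fun u hu => by rw [abs_le]; constructor <;> linarith [hu.1, hu.2])
  have a2 : ∫ t in (s-1)..s, I t ≤ ∫ t in (j * (τ + 1))..((j + 1) * (τ + 1)), I t :=
    intervalIntegral.integral_mono_interval hs0 (by linarith) h2
      (Eventually.of_forall hI0) (hIc.intervalIntegrable _ _)
  have e1 : -(s - 1) + 1 * s = 1 := by ring
  have e2 : -(s - 1) + 1 * (s - 1) = 0 := by ring
  rw [e1, e2, one_mul, zero_mul, zero_add] at a1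
  set A := ∫ t in (j * (τ + 1))..((j + 1) * (τ + 1)), I t
  have a3 : (2 * ν + 2) * A ≤ (δ * φ) ^ 2 := by
    have b1 := mul_le_mul_of_nonneg_left hjI (by positivity : 0 ≤ 2 * ν + 2)
    have b2 := mul_le_mul_of_nonneg_right hNδ (sq_nonneg φ)
    refine le_of_mul_le_mul_right ?_ hNp
    calc (2 * ν + 2) * A * N = (2 * ν + 2) * (A * N) := by ring
      _ ≤ _ := b1
      _ = (2 * ν + 2) * K0 * φ ^ 2 := by ring
      _ ≤ _ := b2
      _ = _ := by ring
  have a4 := mul_le_mul_of_nonneg_left a2 (by positivity : 0 ≤ 2 * ν + 2)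
  exact a1.trans (a4.trans a3)

theorem seg_shift (τ : ℝ) (x : ℝ → Fin n → ℝ) (hx : Continuous x) (s : ℝ)
    (hxs : Continuous fun t => x (t + s)) (t : ℝ) :
    seg τ (fun t => x (t + s)) hxs t = seg τ x hx (t + s) := by
  ext1 θ
  rw [seg_apply, seg_apply]
  congr 1; ring

theorem deriv_shift (x : ℝ → Fin n → ℝ) (v : ℝ → Fin n → ℝ) (q s : ℝ) (hq : 0 ≤ s)
    (hd : ∀ t : ℝ, q ≤ t → HasDerivWithinAt x (v t) (Set.Ici q) t) (t : ℝ) (ht : 0 ≤ t) :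
    HasDerivWithinAt (fun t => x (t + (q + s))) (v (t + (q + s))) (Set.Ici 0) t := by
  have d1 := hd (t + (q + s)) (by linarith)
  have d2 : HasDerivWithinAt (fun t : ℝ => t + (q + s)) 1 (Set.Ici 0) t :=
    ((hasDerivAt_id t).add_const _).hasDerivWithinAt
  have d3 := d1.scomp t d2 (fun u hu => by
    have : (0:ℝ) ≤ u := hu
    show q ≤ u + (q + s)
    linarith)
  rw [one_smul] at d3
  exact d3

/-- Exponential decay from restartable energy estimates. -/
theorem decay_main {τ ν K0 : ℝ} (hτ : 0 < τ) (hν : 0 ≤ ν) (hK0 : 0 ≤ K0) :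
    ∃ M > (0:ℝ), ∃ ε > (0:ℝ), ∀ (x v : ℝ → Fin n → ℝ) (hx : Continuous x), Continuous v →
    (∀ s : ℝ, 0 ≤ s → HasDerivWithinAt x (v s) (Set.Ici 0) s) →
    (∀ s, 0 ≤ s → ∀ T, 0 < T → ∫ t in (0:ℝ)..T, Real.exp (ν * t) ^ 2 *
      (‖x (t + s)‖ ^ 2 + ‖v (t + s)‖ ^ 2) ≤ K0 * ‖seg τ x hx s‖ ^ 2) →
    ∀ t, 0 ≤ t → ‖seg τ x hx t‖ ≤ M * Real.exp (-(ν + ε) * t) * ‖seg τ x hx 0‖ := by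
  set K := Real.exp (ν * τ) * (1 + (2 * ν + 2) * K0) with hK
  have hKp : 0 < K := by positivity
  set δ := 1 / (2 * K * Real.exp (ν * τ)) with hδ
  have hδp : 0 < δ := by positivity
  obtain ⟨N, hN⟩ := exists_nat_gt ((2 * ν + 2) * K0 / δ ^ 2)
  have hNp : (0:ℝ) < N := lt_of_le_of_lt (by positivity) hN
  have hNn : 0 < N := by exact_mod_cast hNp
  rw [div_lt_iff₀ (by positivity)] at hN
  set t1 := (N:ℝ) * (τ + 1) with ht1
  have ht1p : 0 < t1 := by positivity
  refine ⟨2 * K, by positivity, Real.log 2 / t1, div_pos (Real.log_pos (by norm_num)) ht1p, ?_⟩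
  intro x v hx hv hd hE t ht
  have B1 : ∀ s t, 0 ≤ s → 0 ≤ t → Real.exp (ν * t) * ‖seg τ x hx (t + s)‖ ≤
      K * ‖seg τ x hx s‖ := by
    intro s t hs ht
    have hxs : Continuous fun t => x (t + s) := by fun_prop
    have := base1 hτ hν hK0 (fun t => x (t + s)) (fun t => v (t + s)) hxs (by fun_prop)
      (fun u hu => by simpa using deriv_shift x v 0 s hs hd u hu)
      (by rw [seg_shift τ x hx s hxs, zero_add]; exact hE s hs) t ht
    rw [seg_shift τ x hx s hxs, seg_shift τ x hx s hxs, zero_add] at this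
    exact this
  have B2 : ∀ s, 0 ≤ s → ∃ t, 0 ≤ t ∧ t ≤ t1 ∧ Real.exp (ν * t) * ‖seg τ x hx (t + s)‖ ≤
      (Real.exp (ν * τ) * δ) * ‖seg τ x hx s‖ := by
    intro s hs
    have hxs : Continuous fun t => x (t + s) := by fun_prop
    obtain ⟨t, h1, h2, h3⟩ := base2 hτ hν hK0 (fun t => x (t + s)) (fun t => v (t + s)) hxs
      (by fun_prop)
      (fun u hu => by simpa using deriv_shift x v 0 s hs hd u hu)
      (by rw [seg_shift τ x hx s hxs, zero_add]; exact hE s hs) N hNn δ hδp (by linarith)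
    rw [seg_shift τ x hx s hxs, seg_shift τ x hx s hxs, zero_add] at h3
    exact ⟨t, h1, h2, h3⟩
  have H := decay_of_half (fun t => Real.exp (ν * t) * ‖seg τ x hx t‖) K t1 hKp.le ht1p
    (fun t => by positivity)
    (fun s t hs ht => by
      have := mul_le_mul_of_nonneg_left (B1 s t hs ht) (Real.exp_pos (ν * s)).le
      calc _ = Real.exp (ν * s) * (Real.exp (ν * t) * ‖seg τ x hx (t + s)‖) := by
            rw [← mul_assoc, ← Real.exp_add, add_comm t s]; congr 2; ring
        _ ≤ _ := this
        _ = _ := by ring)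
    (fun s hs => by
      obtain ⟨t, h1, h2, h3⟩ := B2 s hs
      have h4 := B1 (t + s) (t1 - t) (by linarith) (by linarith)
      have e : t1 - t + (t + s) = s + t1 := by ring
      rw [e] at h4
      have h5 : K * (Real.exp (ν * τ) * δ) = 1 / 2 := by rw [hδ]; field_simp
      calc Real.exp (ν * (s + t1)) * ‖seg τ x hx (s + t1)‖ =
            Real.exp (ν * s) * Real.exp (ν * t) * (Real.exp (ν * (t1 - t)) * ‖seg τ x hx (s + t1)‖) := by
            rw [← mul_assoc, ← Real.exp_add, ← Real.exp_add]; congr 2; ring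
        _ ≤ Real.exp (ν * s) * Real.exp (ν * t) * (K * ‖seg τ x hx (t + s)‖) := by gcongr
        _ = Real.exp (ν * s) * K * (Real.exp (ν * t) * ‖seg τ x hx (t + s)‖) := by ring
        _ ≤ Real.exp (ν * s) * K * ((Real.exp (ν * τ) * δ) * ‖seg τ x hx s‖) := by gcongr
        _ = (K * (Real.exp (ν * τ) * δ)) * (Real.exp (ν * s) * ‖seg τ x hx s‖) := by ring
        _ = _ := by rw [h5])
    t ht
  simp only [mul_zero, Real.exp_zero, one_mul] at H
  have e : Real.exp (-(ν + Real.log 2 / t1) * t) =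
      Real.exp (-(ν * t)) * Real.exp (-(Real.log 2 / t1) * t) := by
    rw [← Real.exp_add]; congr 1; ring
  rw [e]
  have h0 : Real.exp (-(ν * t)) * Real.exp (ν * t) = 1 := by rw [← Real.exp_add]; simp
  calc ‖seg τ x hx t‖ = Real.exp (-(ν * t)) * (Real.exp (ν * t) * ‖seg τ x hx t‖) := by
        rw [← mul_assoc, h0, one_mul]
    _ ≤ Real.exp (-(ν * t)) * (2 * K * Real.exp (-(Real.log 2 / t1) * t) * ‖seg τ x hx 0‖) := by
        gcongr
    _ = _ := by ring

theorem main_decay {τ : ℝ} {m r : ℕ} (hτ : 0 < τ)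
    (Atil : EE τ n →L[ℝ] (Fin n → ℝ)) (Cop : EE τ n →L[ℝ] (Fin r → ℝ))
    (Btil : Matrix (Fin n) (Fin m) ℝ)
    (Λ : ℝ)
    (G : ℝ → HSp τ n →L[ℝ] HSp τ n)
    (hGadd : ∀ t s : ℝ, 0 ≤ t → 0 ≤ s → G (t + s) = (G t).comp (G s))
    (e : EE τ n →L[ℝ] HSp τ n) (he_inj : Function.Injective e)
    (hG_delay : ∀ (x : ℝ → (Fin n → ℝ)) (hx : Continuous x),
      (∀ s : ℝ, 0 ≤ s → HasDerivWithinAt x (Atil (seg τ x hx s)) (Set.Ici 0) s) →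
      ∀ t : ℝ, 0 ≤ t → G t (e (seg τ x hx 0)) = e (seg τ x hx t))
    (G1 : Matrix (Fin r) (Fin r) ℝ) (G2 : Matrix (Fin r) (Fin m) ℝ)
    (G3 : Matrix (Fin m) (Fin m) ℝ)
    (hF0 : ∀ v : EE τ n, 0 ≤ Gq G1 G2 G3 (Cop v) 0)
    (αmat : ℂ → Matrix (Fin n) (Fin n) ℂ) (γmat : ℂ → Matrix (Fin r) (Fin n) ℂ)
    (hα : ∀ (p : ℂ) (w : Fin n → ℂ),
      Atil (expSegRe τ p w) = fun i => ((αmat p).mulVec w i).re)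
    (hγ : ∀ (p : ℂ) (w : Fin n → ℂ),
      Cop (expSegRe τ p w) = fun i => ((γmat p).mulVec w i).re)
    (ν : ℝ) (hν : 0 ≤ ν)
    (hroots : ∀ p : ℂ,
      (αmat p - p • (1 : Matrix (Fin n) (Fin n) ℂ)).det = 0 → p.re < -ν)
    (GE : ℝ → EE τ n → EE τ n)
    (hGE : ∀ t : ℝ, 0 ≤ t → ∀ φ : EE τ n, e (GE t φ) = G t (e φ))
    (hstab : ∀ v₀ : EE τ n,
      Tendsto (fun t : ℝ => Real.exp (ν * t) * ‖GE t v₀‖) atTop (𝓝 0))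
    (hfreq : ∀ ω : ℝ, ∃ δ > (0:ℝ), ∀ (ξ : Fin m → ℂ) (u : Fin n → ℂ),
      (αmat (Complex.I * ω - ν) - (Complex.I * ω - ν) •
          (1 : Matrix (Fin n) (Fin n) ℂ)).mulVec u =
        (Btil.map (fun x : ℝ => (x : ℂ))).mulVec ξ →
      GqC G1 G2 G3 (fun i => -((γmat (Complex.I * ω - ν)).mulVec u i)) ξ ≤
        -δ * ∑ i, ‖ξ i‖ ^ 2) :
    ∃ M > (0:ℝ), ∃ ε > (0:ℝ), ∀ (x : ℝ → Fin n → ℝ) (hx : Continuous x) (ξ : ℝ → Fin m → ℝ),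
      Continuous ξ → ∀ q : ℝ,
      (∀ s : ℝ, q ≤ s →
        HasDerivWithinAt x (Atil (seg τ x hx s) + Btil.mulVec (ξ s)) (Set.Ici q) s) →
      (∀ s : ℝ, q ≤ s → 0 ≤ Gq G1 G2 G3 (Cop (seg τ x hx s)) (ξ s)) →
      (∀ s : ℝ, q ≤ s → ‖ξ s‖ ≤ Λ * ‖Cop (seg τ x hx s)‖) →
      ∀ t, 0 ≤ t → ‖seg τ x hx (t + q)‖ ≤ M * Real.exp (-(ν + ε) * t) * ‖seg τ x hx q‖ := by
  obtain ⟨M, hM, ε, hε, hlin⟩ := lin_decay hτ Atil G hGadd e he_inj hG_delay ν hν GE hGE hstab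
  have hL : 0 ≤ (m : ℝ) * Λ ^ 2 := by positivity
  obtain ⟨δ', hδ', δ2, hδ2, hU⟩ := freq_uniform Atil Cop Btil G1 G2 G3 αmat γmat hα hγ ν hν
    hroots hfreq (m * Λ ^ 2) hL
  obtain ⟨c, hc, K, hK, hpt⟩ := pointwise_bound Atil Cop Btil G1 G2 G3 δ' (m * Λ ^ 2) δ2 hδ' hδ2
  have hEn := energy hτ hν hε hM Atil Cop Btil G1 G2 G3 δ' (m * Λ ^ 2) δ2 hδ' hL hδ2
    (fun C y hy hC η hη S hS hd => plancherel_energy hτ hν hε Atil Cop Btil G1 G2 G3 αmat γmat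
      hα hγ δ' (m * Λ ^ 2) δ2 hU y hy hC η hη S hS hd) hF0 hlin hc hK hpt
  have hK0 : 0 ≤ K * M ^ 2 / (2 * ε * c) := by positivity
  obtain ⟨M', hM', ε', hε', hD⟩ := decay_main (n := n) hτ hν hK0
  refine ⟨M', hM', ε', hε', ?_⟩
  intro x hx ξ hξ q hd hG hξΛ t ht
  have hv : Continuous fun s => Atil (seg τ x hx s) + Btil.mulVec (ξ s) :=
    (Atil.continuous.comp (seg_continuous τ x hx)).add (continuous_const.matrix_mulVec hξ)
  have hxq : ∀ s, Continuous fun t => x (t + s) := fun s => by fun_prop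
  have hseg : ∀ s u, seg τ (fun t => x (t + s)) (hxq s) u = seg τ x hx (u + s) :=
    fun s u => seg_shift τ x hx s (hxq s) u
  have key := hD (fun t => x (t + q))
    (fun t => Atil (seg τ x hx (t + q)) + Btil.mulVec (ξ (t + q))) (hxq q)
    (hv.comp (continuous_id.add continuous_const))
    (fun u hu => by
      have := deriv_shift x (fun s => Atil (seg τ x hx s) + Btil.mulVec (ξ s)) q 0 le_rfl hd u hu
      simp only [add_zero] at this
      exact this)
    (fun s hs T hT => by
      have h1 := hEn (fun t => x (t + (q + s))) (hxq (q + s)) (fun t => ξ (t + (q + s)))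
        (by fun_prop)
        (fun u hu => by
          rw [hseg]
          exact deriv_shift x (fun s => Atil (seg τ x hx s) + Btil.mulVec (ξ s)) q s hs hd u hu)
        (fun u hu => by rw [hseg]; exact hG _ (by linarith))
        (fun u hu => by
          rw [hseg]
          have a1 := hξΛ (u + (q + s)) (by linarith)
          have a2 := real_sum_le (ξ (u + (q + s)))
          have a3 := real_norm_sq_le (Cop (seg τ x hx (u + (q + s))))
          calc _ ≤ _ := a2
            _ ≤ m * (Λ * ‖Cop (seg τ x hx (u + (q + s)))‖) ^ 2 := by gcongr
            _ = m * Λ ^ 2 * ‖Cop (seg τ x hx (u + (q + s)))‖ ^ 2 := by ring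
            _ ≤ _ := by gcongr) T hT
      simp only [hseg, zero_add] at h1
      simp only [hseg, add_assoc, add_comm s q]
      exact h1) t ht
  simpa only [hseg, zero_add] using key

end Helpers

/-- Theorem 5.9 of the paper, the stability criteria: under the
hypotheses of the quadratic Lyapunov functional theorem with `j = 0` and `ν ≥ 0` (no
characteristic roots with `Re p ≥ -ν` and the frequency-domain condition), one has:
(1) under (SC), (L1) and `W ≡ 0`, all solutions decay as `M e^{-(ν + ε)t} ‖v₀‖`;
(2) under (MSC) and (L2), any complete bounded trajectory `v*` is unique and attracts all
solutions at the rate `M e^{-(ν + ε)t} ‖v₀ - v*(q)‖`. -/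
theorem statement19 (τ : ℝ) (hτ : 0 < τ) (n m r : ℕ)
    (Atil : EE τ n →L[ℝ] (Fin n → ℝ))
    (Cop : EE τ n →L[ℝ] (Fin r → ℝ))
    (Btil : Matrix (Fin n) (Fin m) ℝ)
    (Wf : ℝ → (Fin n → ℝ)) (hWcont : Continuous Wf) (hWbdd : ∃ c, ∀ t, ‖Wf t‖ ≤ c)
    (F : ℝ → (Fin r → ℝ) → (Fin m → ℝ))
    (hFcont : Continuous fun p : ℝ × (Fin r → ℝ) => F p.1 p.2)
    (Λ : ℝ) (hΛ : 0 < Λ)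
    (hF : (∀ (t : ℝ) (σ : Fin r → ℝ), ‖F t σ‖ ≤ Λ * ‖σ‖) ∨
      (∀ (t : ℝ) (σ₁ σ₂ : Fin r → ℝ), ‖F t σ₁ - F t σ₂‖ ≤ Λ * ‖σ₁ - σ₂‖))
    -- the semigroup of the linear part, the embedding `𝔼 ⊆ ℍ` and the cocycle
    (G : ℝ → HSp τ n →L[ℝ] HSp τ n)
    (hG0 : G 0 = ContinuousLinearMap.id ℝ (HSp τ n))
    (hGadd : ∀ t s : ℝ, 0 ≤ t → 0 ≤ s → G (t + s) = (G t).comp (G s))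
    (hGcont : ∀ v : HSp τ n, ContinuousOn (fun t => G t v) (Set.Ici (0:ℝ)))
    (e : EE τ n →L[ℝ] HSp τ n) (he_inj : Function.Injective e)
    (he1 : ∀ φ : EE τ n, (e φ).1 = φ ⟨0, Set.right_mem_Icc.mpr (by linarith)⟩)
    (he2 : ∀ φ : EE τ n, ∀ᵐ θ ∂(μτ τ), ∀ hθ : θ ∈ Set.Icc (-τ) (0:ℝ),
      ((e φ).2 : ℝ → (Fin n → ℝ)) θ = φ ⟨θ, hθ⟩)
    (hG_delay : ∀ (x : ℝ → (Fin n → ℝ)) (hx : Continuous x),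
      (∀ s : ℝ, 0 ≤ s → HasDerivWithinAt x (Atil (seg τ x hx s)) (Set.Ici 0) s) →
      ∀ t : ℝ, 0 ≤ t → G t (e (seg τ x hx 0)) = e (seg τ x hx t))
    (Psi : ℝ → ℝ → EE τ n → EE τ n)
    (hPsi : ∀ (q : ℝ) (v₀ : EE τ n), ∃ (x : ℝ → (Fin n → ℝ)) (hx : Continuous x),
      seg τ x hx q = v₀ ∧
      (∀ t : ℝ, q ≤ t → HasDerivWithinAt x
        (Atil (seg τ x hx t) + Btil.mulVec (F t (Cop (seg τ x hx t))) + Wf t)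
        (Set.Ici q) t) ∧
      ∀ t : ℝ, 0 ≤ t → Psi t q v₀ = seg τ x hx (t + q))
    -- the quadratic form `𝓕(v, ξ) = 𝒢(Cv, ξ)` and its properties
    (G1 : Matrix (Fin r) (Fin r) ℝ) (hG1 : G1.IsSymm)
    (G2 : Matrix (Fin r) (Fin m) ℝ)
    (G3 : Matrix (Fin m) (Fin m) ℝ) (hG3 : G3.IsSymm)
    (hF0 : ∀ v : EE τ n, 0 ≤ Gq G1 G2 G3 (Cop v) 0)
    (hcase : ((∀ (t : ℝ) (v : EE τ n), 0 ≤ Gq G1 G2 G3 (Cop v) (F t (Cop v))) ∧ Wf = 0) ∨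
      (∀ (t : ℝ) (v₁ v₂ : EE τ n),
        0 ≤ Gq G1 G2 G3 (Cop (v₁ - v₂)) (F t (Cop v₁) - F t (Cop v₂))))
    -- the matrix functions `α(p)`, `γ(p)`
    (αmat : ℂ → Matrix (Fin n) (Fin n) ℂ) (γmat : ℂ → Matrix (Fin r) (Fin n) ℂ)
    (hα : ∀ (p : ℂ) (w : Fin n → ℂ),
      Atil (expSegRe τ p w) = fun i => ((αmat p).mulVec w i).re)
    (hγ : ∀ (p : ℂ) (w : Fin n → ℂ),
      Cop (expSegRe τ p w) = fun i => ((γmat p).mulVec w i).re)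
    -- `j = 0`: no characteristic roots with `Re p ≥ -ν`
    (ν : ℝ) (hν : 0 ≤ ν)
    (hroots : ∀ p : ℂ,
      (αmat p - p • (1 : Matrix (Fin n) (Fin n) ℂ)).det = 0 → p.re < -ν)
    -- the shifted linear semigroup is stable on `𝔼` (`𝔼ˢ(ν) = 𝔼`, `𝔼ᵘ(ν) = 0`)
    (GE : ℝ → EE τ n → EE τ n)
    (hGE : ∀ t : ℝ, 0 ≤ t → ∀ φ : EE τ n, e (GE t φ) = G t (e φ))
    (hstab : ∀ v₀ : EE τ n,
      Tendsto (fun t : ℝ => Real.exp (ν * t) * ‖GE t v₀‖) atTop (𝓝 0))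
    -- the frequency-domain condition
    (hfreq : ∀ ω : ℝ, ∃ δ > (0:ℝ), ∀ (ξ : Fin m → ℂ) (u : Fin n → ℂ),
      (αmat (Complex.I * ω - ν) - (Complex.I * ω - ν) •
          (1 : Matrix (Fin n) (Fin n) ℂ)).mulVec u =
        (Btil.map (fun x : ℝ => (x : ℂ))).mulVec ξ →
      GqC G1 G2 G3 (fun i => -((γmat (Complex.I * ω - ν)).mulVec u i)) ξ ≤
        -δ * ∑ i, ‖ξ i‖ ^ 2) :
    -- case (SC) with (L1) and `W ≡ 0`
    ((((∀ (t : ℝ) (v : EE τ n), 0 ≤ Gq G1 G2 G3 (Cop v) (F t (Cop v))) ∧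
        (∀ (t : ℝ) (σ : Fin r → ℝ), ‖F t σ‖ ≤ Λ * ‖σ‖)) ∧ Wf = 0) →
      ∃ M > (0:ℝ), ∃ ε > (0:ℝ), ∀ t : ℝ, 0 ≤ t → ∀ (q : ℝ) (v₀ : EE τ n),
        ‖Psi t q v₀‖ ≤ M * Real.exp (-(ν + ε) * t) * ‖v₀‖) ∧
    -- case (MSC) with (L2)
    (((∀ (t : ℝ) (v₁ v₂ : EE τ n),
          0 ≤ Gq G1 G2 G3 (Cop (v₁ - v₂)) (F t (Cop v₁) - F t (Cop v₂))) ∧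
        (∀ (t : ℝ) (σ₁ σ₂ : Fin r → ℝ), ‖F t σ₁ - F t σ₂‖ ≤ Λ * ‖σ₁ - σ₂‖)) →
      ∀ vstar : ℝ → EE τ n,
        (∀ t : ℝ, 0 ≤ t → ∀ q : ℝ, Psi t q (vstar q) = vstar (q + t)) →
        (∃ Cb : ℝ, ∀ s : ℝ, ‖vstar s‖ ≤ Cb) →
        ((∀ v2 : ℝ → EE τ n,
            (∀ t : ℝ, 0 ≤ t → ∀ q : ℝ, Psi t q (v2 q) = v2 (q + t)) →
            (∃ Cb : ℝ, ∀ s : ℝ, ‖v2 s‖ ≤ Cb) → v2 = vstar) ∧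
          ∃ M > (0:ℝ), ∃ ε > (0:ℝ), ∀ t : ℝ, 0 ≤ t → ∀ (q : ℝ) (v₀ : EE τ n),
            ‖Psi t q v₀ - Psi t q (vstar q)‖ ≤
              M * Real.exp (-(ν + ε) * t) * ‖v₀ - vstar q‖)) := by
  obtain ⟨M, hM, ε, hε, hmain⟩ := main_decay hτ Atil Cop Btil Λ G hGadd e he_inj hG_delay G1 G2 G3
    hF0 αmat γmat hα hγ ν hν hroots GE hGE hstab hfreq
  refine ⟨?_, ?_⟩
  · rintro ⟨⟨hSC, hL1⟩, hW0⟩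
    refine ⟨M, hM, ε, hε, fun t ht q v₀ => ?_⟩
    obtain ⟨x, hx, hx0, hxd, hxP⟩ := hPsi q v₀
    rw [hxP t ht]
    have hξ : Continuous fun s => F s (Cop (seg τ x hx s)) :=
      hFcont.comp (continuous_id.prodMk (Cop.continuous.comp (seg_continuous τ x hx)))
    have := hmain x hx (fun s => F s (Cop (seg τ x hx s))) hξ q
      (fun s hs => by simpa [hW0] using hxd s hs) (fun s _ => hSC s _) (fun s _ => hL1 s _) t ht
    rwa [hx0] at this
  · rintro ⟨hMSC, hL2⟩ vstar hvs ⟨Cb, hCb⟩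
    have hdiff : ∀ t : ℝ, 0 ≤ t → ∀ (q : ℝ) (v₀ v₁ : EE τ n),
        ‖Psi t q v₀ - Psi t q v₁‖ ≤ M * Real.exp (-(ν + ε) * t) * ‖v₀ - v₁‖ := by
      intro t ht q v₀ v₁
      obtain ⟨x, hx, hx0, hxd, hxP⟩ := hPsi q v₀
      obtain ⟨y, hy, hy0, hyd, hyP⟩ := hPsi q v₁
      rw [hxP t ht, hyP t ht]
      have hξ : Continuous fun s => F s (Cop (seg τ x hx s)) - F s (Cop (seg τ y hy s)) :=
        (hFcont.comp (continuous_id.prodMk (Cop.continuous.comp (seg_continuous τ x hx)))).sub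
          (hFcont.comp (continuous_id.prodMk (Cop.continuous.comp (seg_continuous τ y hy))))
      have hseg : ∀ s, seg τ (fun u => x u - y u) (hx.sub hy) s = seg τ x hx s - seg τ y hy s :=
        fun s => rfl
      have := hmain (fun u => x u - y u) (hx.sub hy)
        (fun s => F s (Cop (seg τ x hx s)) - F s (Cop (seg τ y hy s))) hξ q
        (fun s hs => by
          have d := (hxd s hs).sub (hyd s hs)
          rw [hseg, map_sub, Matrix.mulVec_sub]
          refine d.congr_deriv ?_
          abel)
        (fun s _ => by rw [hseg]; exact hMSC s _ _)
        (fun s _ => by rw [hseg, map_sub]; exact hL2 s _ _) t ht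
      rwa [hseg, hseg, hx0, hy0] at this
    refine ⟨?_, M, hM, ε, hε, fun t ht q v₀ => hdiff t ht q v₀ _⟩
    rintro v2 hv2 ⟨Cb2, hCb2⟩
    funext s
    have hb : ∀ t : ℝ, 0 ≤ t → ‖v2 s - vstar s‖ ≤
        M * Real.exp (-(ν + ε) * t) * (Cb2 + Cb) := by
      intro t ht
      have h1 := hdiff t ht (s - t) (v2 (s - t)) (vstar (s - t))
      rw [hv2 t ht, hvs t ht, sub_add_cancel] at h1
      refine h1.trans ?_
      gcongr
      exact (norm_sub_le _ _).trans (add_le_add (hCb2 _) (hCb _))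
    have hlim : Tendsto (fun t : ℝ => M * Real.exp (-(ν + ε) * t) * (Cb2 + Cb)) atTop
        (𝓝 (M * 0 * (Cb2 + Cb))) := by
      refine Tendsto.mul_const _ (Tendsto.const_mul _ ?_)
      refine Real.tendsto_exp_atBot.comp ?_
      exact tendsto_id.const_mul_atTop_of_neg (by linarith)
    have h0 := ge_of_tendsto hlim ((eventually_ge_atTop 0).mono hb)
    rw [mul_zero, zero_mul] at h0
    exact sub_eq_zero.1 (norm_le_zero_iff.1 h0)

end DelayStability
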